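/- arXiv:2503.05903 — 2 statements merged into one kernel-verified Lean document; each statement's English description precedes it below -/
import Mathlib

section
/- Let n∈ℕ, p∈(1,2], s∈(0,1), and write p' = p/(p−1). Let Ω⊆ℝⁿ be a bounded open set, f∈L^{p'}_loc(Ω), and let B_{2R}(x_o) have closure contained in Ω. Let u:ℝⁿ→ℝ be a local weak solution of (−Δ_p)^s u = f in Ω, and let v:ℝⁿ→ℝ be a local weak solution of (−Δ_p)^s v = 0 in B_R(x_o) with v∈L^p(B_R(x_o)), [v]_{W^{s,p}(B_R(x_o))}<∞ and v = u a.e. in ℝⁿ∖B_R(x_o). Set w := u−v. Then there exists a constant c = c(n,p,s) such that for every δ∈(0,1] one has ∬_{B_{2R}(x_o)×B_{2R}(x_o)} |w(x)−w(y)|^p/|x−y|^{n+sp} dx dy ≤ δ ∬_{B_{2R}(x_o)×B_{2R}(x_o)} |u(x)−u(y)|^p/|x−y|^{n+sp} dx dy + c δ^{−(2−p)/(p−1)} R^{sp'} ∫_{B_R(x_o)} |f|^{p'} dx. -/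
open MeasureTheory Metric Set
open scoped ENNReal

noncomputable section

/-- Double Gagliardo integral `∬_{D×D} |u(x)-u(y)|^p / |x-y|^{n+sp} dx dy` in `ℝ≥0∞`. -/
def gagliardoE (n : ℕ) (s p : ℝ) (D : Set (EuclideanSpace ℝ (Fin n)))
    (u : EuclideanSpace ℝ (Fin n) → ℝ) : ℝ≥0∞ :=
  ∫⁻ x in D, ∫⁻ y in D, ENNReal.ofReal (|u x - u y| ^ p / dist x y ^ ((n : ℝ) + s * p))

/-- Nonlocal tail `Tail(u; B_R(x₀))` in `ℝ≥0∞`. -/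
def tailE (n : ℕ) (s p : ℝ) (u : EuclideanSpace ℝ (Fin n) → ℝ)
    (x₀ : EuclideanSpace ℝ (Fin n)) (R : ℝ) : ℝ≥0∞ :=
  (ENNReal.ofReal (R ^ (s * p)) *
      ∫⁻ x in (ball x₀ R)ᶜ,
        ENNReal.ofReal (|u x| ^ (p - 1) / dist x x₀ ^ ((n : ℝ) + s * p))) ^ (1 / (p - 1))

/-- `f ∈ L^q_loc(D)`. -/
def MemLploc (n : ℕ) (q : ℝ) (D : Set (EuclideanSpace ℝ (Fin n)))
    (f : EuclideanSpace ℝ (Fin n) → ℝ) : Prop :=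
  Measurable f ∧
    ∀ K : Set (EuclideanSpace ℝ (Fin n)), K ⊆ D → IsCompact K →
      (∫⁻ x in K, ENNReal.ofReal (|f x| ^ q)) < ⊤

/-- `u` is a local weak solution of `(-Δ_p)^s u = f` in `D`. -/
def IsLocalWeakSolution (n : ℕ) (p s : ℝ) (D : Set (EuclideanSpace ℝ (Fin n)))
    (f u : EuclideanSpace ℝ (Fin n) → ℝ) : Prop :=
  Measurable u ∧
  (∀ K : Set (EuclideanSpace ℝ (Fin n)), K ⊆ D → IsCompact K →
      (∫⁻ x in K, ENNReal.ofReal (|u x| ^ p)) < ⊤ ∧ gagliardoE n s p K u < ⊤) ∧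
  (∫⁻ x, ENNReal.ofReal (|u x| ^ (p - 1) / (1 + ‖x‖) ^ ((n : ℝ) + s * p))) < ⊤ ∧
  ∀ φ : EuclideanSpace ℝ (Fin n) → ℝ, Measurable φ →
    (∃ K : Set (EuclideanSpace ℝ (Fin n)), IsCompact K ∧ K ⊆ D ∧
      ∀ᵐ x, x ∉ K → φ x = 0) →
    (∫⁻ x, ENNReal.ofReal (|φ x| ^ p)) < ⊤ →
    gagliardoE n s p Set.univ φ < ⊤ →
    (∫ x, ∫ y,
        |u x - u y| ^ (p - 2) * (u x - u y) * (φ x - φ y) / dist x y ^ ((n : ℝ) + s * p)) =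
      ∫ x in D, f x * φ x

/-- The signed `γ`-power `𝐚^γ = |a|^{γ-1} a`. -/
def sgnPow (γ a : ℝ) : ℝ := |a| ^ (γ - 1) * a

/-!
For `p ≤ 2` the flux `t ↦ |t|^(p-2) t` is only degenerately monotone: its increment over `[b, a]`
times `a - b` controls `(a - b)² (|a| + |b|)^(p-2)` rather than `|a - b|^p`. Distinguishing
whether `|a - b|^p ≤ δ |a|^p` trades one for the other at the price `δ |a|^p`, with a factor
`δ^(-(2-p)/p)`. Integrated over `B_{2R} × B_{2R}`, this bounds the seminorm of `w = u - v` by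
`δ [u]^p` plus a multiple of the flux pairing of `u` and `v` with `w`, so the estimate follows once
that pairing is at most `∫ |f| |w|`: Young's inequality and the fractional Poincaré inequality for
`w`, which vanishes outside `B_R`, absorb the right-hand side.

Formally the pairing equals `∫ f w`, but `w` is not compactly supported in `B_R`, hence not an
admissible test function. One tests with `w η_ε` instead, where the cutoffs `η_ε` increase to the
indicator of `B_R`, and needs the error where the cutoffs vary to vanish in the limit. It is
controlled by a Hardy-type integral of `|w|^p` against the exterior kernel of the ball; this is
finite because a first, lossy application of the same test bounds it uniformly in `ε`.
-/

open Filter Topology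

section SignedPower

variable {γ a b : ℝ}

lemma sgnPow_neg (γ a : ℝ) : sgnPow γ (-a) = -sgnPow γ a := by
  simp only [sgnPow, abs_neg, mul_neg]

lemma rpow_sub_one_mul_self (hγ : γ ≠ 0) (ha : 0 ≤ a) : a ^ (γ - 1) * a = a ^ γ := by
  rcases ha.eq_or_lt with rfl | ha
  · rw [mul_zero, Real.zero_rpow hγ]
  · rw [← Real.rpow_add_one ha.ne', sub_add_cancel]

lemma sgnPow_of_nonneg (hγ : γ ≠ 0) (ha : 0 ≤ a) : sgnPow γ a = a ^ γ := by
  rw [sgnPow, abs_of_nonneg ha, rpow_sub_one_mul_self hγ ha]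

lemma abs_sgnPow (hγ : γ ≠ 0) (a : ℝ) : |sgnPow γ a| = |a| ^ γ := by
  rw [sgnPow, abs_mul, abs_of_nonneg (by positivity), rpow_sub_one_mul_self hγ (abs_nonneg a)]

@[fun_prop]
lemma measurable_sgnPow (γ : ℝ) : Measurable (sgnPow γ) := by
  unfold sgnPow
  fun_prop

lemma rpow_le_rpow_add_mul_sub (hγ₀ : 0 ≤ γ) (hγ₁ : γ ≤ 1) (ha : 0 < a) (hb : 0 ≤ b) :
    b ^ γ ≤ a ^ γ + γ * a ^ (γ - 1) * (b - a) := by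
  have bernoulli : (b / a) ^ γ ≤ 1 + γ * (b / a - 1) := by
    simpa using rpow_one_add_le_one_add_mul_self (s := b / a - 1) (p := γ)
      (by linarith [div_nonneg hb ha.le]) hγ₀ hγ₁
  rw [Real.div_rpow hb ha.le, div_le_iff₀ (Real.rpow_pos_of_pos ha _)] at bernoulli
  refine bernoulli.trans_eq ?_
  rw [Real.rpow_sub_one ha.ne']
  field_simp

lemma mul_sq_le_sgnPow_sub_mul_sub_of_nonneg (hγ₀ : 0 < γ) (hγ₁ : γ ≤ 1) (hb : 0 ≤ b)
    (hba : b < a) :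
    γ * (|a| + |b|) ^ (γ - 1) * (a - b) ^ 2 ≤ (sgnPow γ a - sgnPow γ b) * (a - b) := by
  have ha : 0 < a := hb.trans_lt hba
  have : 0 ≤ a - b := (sub_pos.2 hba).le
  rw [sgnPow_of_nonneg hγ₀.ne' ha.le, sgnPow_of_nonneg hγ₀.ne' hb, abs_of_pos ha,
    abs_of_nonneg hb]
  have tangent := rpow_le_rpow_add_mul_sub hγ₀.le hγ₁ ha hb
  calc γ * (a + b) ^ (γ - 1) * (a - b) ^ 2
      ≤ γ * a ^ (γ - 1) * (a - b) ^ 2 := by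
        gcongr γ * ?_ * _
        exact Real.rpow_le_rpow_of_nonpos ha (by linarith) (by linarith)
    _ = γ * a ^ (γ - 1) * (a - b) * (a - b) := by ring
    _ ≤ (a ^ γ - b ^ γ) * (a - b) := by gcongr; linarith

lemma mul_sq_le_sgnPow_sub_mul_sub_of_nonpos_of_nonneg (hγ₀ : 0 < γ) (hγ₁ : γ ≤ 1) (hb : b ≤ 0)
    (ha : 0 ≤ a) :
    γ * (|a| + |b|) ^ (γ - 1) * (a - b) ^ 2 ≤ (sgnPow γ a - sgnPow γ b) * (a - b) := by
  obtain ⟨c, rfl⟩ : ∃ c, b = -c := ⟨-b, (neg_neg b).symm⟩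
  have hc : 0 ≤ c := neg_nonpos.1 hb
  rw [sgnPow_neg, sgnPow_of_nonneg hγ₀.ne' ha, sgnPow_of_nonneg hγ₀.ne' hc, abs_neg,
    abs_of_nonneg ha, abs_of_nonneg hc, sub_neg_eq_add, sub_neg_eq_add]
  calc γ * (a + c) ^ (γ - 1) * (a + c) ^ 2
      = γ * ((a + c) ^ (γ - 1) * (a + c) * (a + c)) := by ring
    _ ≤ 1 * ((a + c) ^ (γ - 1) * (a + c) * (a + c)) := by gcongr
    _ = (a + c) ^ γ * (a + c) := by
        rw [one_mul, rpow_sub_one_mul_self hγ₀.ne' (add_nonneg ha hc)]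
    _ ≤ (a ^ γ + c ^ γ) * (a + c) := by
        gcongr
        exact Real.rpow_add_le_add_rpow ha hc hγ₀.le hγ₁

theorem mul_sq_le_sgnPow_sub_mul_sub (hγ₀ : 0 < γ) (hγ₁ : γ ≤ 1) (a b : ℝ) :
    γ * (|a| + |b|) ^ (γ - 1) * (a - b) ^ 2 ≤ (sgnPow γ a - sgnPow γ b) * (a - b) := by
  wlog hba : b < a generalizing a b
  · rcases (not_lt.1 hba).eq_or_lt with rfl | hab
    · simp
    · convert this b a hab using 1 <;> ring_nf
  rcases le_total 0 b with hb | hb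
  · exact mul_sq_le_sgnPow_sub_mul_sub_of_nonneg hγ₀ hγ₁ hb hba
  rcases le_total 0 a with ha | ha
  · exact mul_sq_le_sgnPow_sub_mul_sub_of_nonpos_of_nonneg hγ₀ hγ₁ hb ha
  · have reflected := mul_sq_le_sgnPow_sub_mul_sub_of_nonneg hγ₀ hγ₁ (neg_nonneg.2 ha)
      (neg_lt_neg hba)
    rw [sgnPow_neg, sgnPow_neg, abs_neg, abs_neg] at reflected
    convert reflected using 1 <;> ring_nf

lemma sgnPow_sub_mul_sub_nonneg (hγ₀ : 0 < γ) (hγ₁ : γ ≤ 1) (a b : ℝ) :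
    0 ≤ (sgnPow γ a - sgnPow γ b) * (a - b) :=
  le_trans (by positivity) (mul_sq_le_sgnPow_sub_mul_sub hγ₀ hγ₁ a b)

lemma abs_sub_rpow_le_of_add_le {p M : ℝ} (hp₁ : 1 < p) (hp₂ : p ≤ 2)
    (hM : |a| + |b| ≤ M * |a - b|) :
    |a - b| ^ p ≤
      M ^ (2 - p) / (p - 1) * ((sgnPow (p - 1) a - sgnPow (p - 1) b) * (a - b)) := by
  have hp : 0 < p - 1 := sub_pos.2 hp₁
  rcases (abs_nonneg (a - b)).eq_or_lt with h₀ | hab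
  · simp [abs_eq_zero.1 h₀.symm, Real.zero_rpow (by linarith : p ≠ 0)]
  have hsum : 0 < |a| + |b| := hab.trans_le (abs_sub a b)
  have hM₀ : 0 < M := pos_of_mul_pos_left (hsum.trans_le hM) hab.le
  rw [div_mul_eq_mul_div, le_div_iff₀ hp]
  calc |a - b| ^ p * (p - 1)
      = M ^ (2 - p) * ((p - 1) * (M * |a - b|) ^ (p - 1 - 1) * (a - b) ^ 2) := by
        rw [Real.mul_rpow hM₀.le hab.le, ← sq_abs (a - b),
          show |a - b| ^ p = |a - b| ^ (p - 1 - 1) * |a - b| ^ 2 by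
            rw [← Real.rpow_add_natCast hab.ne']; ring_nf,
          show (p - 1 - 1) = -(2 - p) by ring, Real.rpow_neg hM₀.le]
        field_simp
    _ ≤ M ^ (2 - p) * ((p - 1) * (|a| + |b|) ^ (p - 1 - 1) * (a - b) ^ 2) := by
        gcongr M ^ (2 - p) * (_ * ?_ * _ ^ 2)
        exact Real.rpow_le_rpow_of_nonpos hsum hM (by linarith)
    _ ≤ M ^ (2 - p) * ((sgnPow (p - 1) a - sgnPow (p - 1) b) * (a - b)) := by
        gcongr M ^ (2 - p) * ?_
        exact mul_sq_le_sgnPow_sub_mul_sub hp (by linarith) a b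

theorem abs_sub_rpow_le_add_sgnPow {p δ : ℝ} (hp₁ : 1 < p) (hp₂ : p ≤ 2) (hδ₀ : 0 < δ)
    (hδ₁ : δ ≤ 1) (a b : ℝ) :
    |a - b| ^ p ≤ δ * |a| ^ p + 3 / (p - 1) * δ ^ (-((2 - p) / p)) *
      ((sgnPow (p - 1) a - sgnPow (p - 1) b) * (a - b)) := by
  have hp : 0 < p - 1 := sub_pos.2 hp₁
  have flux_nonneg := sgnPow_sub_mul_sub_nonneg hp (by linarith) a b
  rcases le_total (|a - b| ^ p) (δ * |a| ^ p) with h | h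
  · exact h.trans (le_add_of_nonneg_right (by positivity))
  set τ := δ ^ (-p⁻¹)
  have one_le_τ : 1 ≤ τ := Real.one_le_rpow_of_pos_of_le_one_of_nonpos hδ₀ hδ₁
    (by simpa using (by linarith : 0 ≤ p))
  have ha : |a| ≤ τ * |a - b| := by
    rw [← Real.rpow_le_rpow_iff (abs_nonneg a) (by positivity) (by linarith : 0 < p),
      Real.mul_rpow (by positivity) (abs_nonneg _), ← Real.rpow_mul hδ₀.le, neg_mul,
      inv_mul_cancel₀ (by linarith), Real.rpow_neg_one, inv_mul_eq_div, le_div_iff₀ hδ₀]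
    linarith
  have hsum : |a| + |b| ≤ 3 * τ * |a - b| := by
    have := abs_sub_abs_le_abs_sub b a
    rw [abs_sub_comm b a] at this
    nlinarith [abs_nonneg (a - b)]
  have const_le : (3 * τ) ^ (2 - p) ≤ 3 * δ ^ (-((2 - p) / p)) := by
    rw [Real.mul_rpow (by norm_num) (by positivity), ← Real.rpow_mul hδ₀.le,
      show -p⁻¹ * (2 - p) = -((2 - p) / p) by ring]
    gcongr
    exact Real.rpow_le_self_of_one_le (by norm_num) (by linarith)
  calc |a - b| ^ p
      ≤ (3 * τ) ^ (2 - p) / (p - 1) * ((sgnPow (p - 1) a - sgnPow (p - 1) b) * (a - b)) :=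
        abs_sub_rpow_le_of_add_le hp₁ hp₂ hsum
    _ ≤ 3 * δ ^ (-((2 - p) / p)) / (p - 1) *
          ((sgnPow (p - 1) a - sgnPow (p - 1) b) * (a - b)) := by gcongr
    _ = 3 / (p - 1) * δ ^ (-((2 - p) / p)) *
          ((sgnPow (p - 1) a - sgnPow (p - 1) b) * (a - b)) := by ring
    _ ≤ _ := le_add_of_nonneg_left (by positivity)

end SignedPower

section Young

variable {p μ a b : ℝ}

lemma rpow_sub_one_mul_le (hp : 1 ≤ p) (hμ : 0 < μ) (ha : 0 ≤ a) (hb : 0 ≤ b) :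
    a ^ (p - 1) * b ≤ μ * a ^ p + μ ^ (-(p - 1)) * b ^ p := by
  have hp₀ : p ≠ 0 := by linarith
  rcases le_total b (μ * a) with h | h
  · calc a ^ (p - 1) * b ≤ a ^ (p - 1) * (μ * a) := by gcongr
      _ = μ * a ^ p := by rw [← rpow_sub_one_mul_self hp₀ ha]; ring
      _ ≤ _ := le_add_of_nonneg_right (by positivity)
  · have hab : a ≤ b / μ := by rwa [le_div_iff₀' hμ]
    calc a ^ (p - 1) * b ≤ (b / μ) ^ (p - 1) * b := by gcongr
      _ = μ ^ (-(p - 1)) * b ^ p := by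
          rw [← rpow_sub_one_mul_self hp₀ hb, Real.div_rpow hb hμ.le, Real.rpow_neg hμ.le]
          field_simp
      _ ≤ _ := le_add_of_nonneg_left (by positivity)

lemma abs_mul_abs_le_rpow (hp : 1 < p) (hμ : 0 < μ) (a b : ℝ) :
    |a| * |b| ≤ μ * |a| ^ (p / (p - 1)) + μ ^ (-(p - 1)) * |b| ^ p := by
  have hp' : p - 1 ≠ 0 := by linarith
  have young := rpow_sub_one_mul_le hp.le hμ (Real.rpow_nonneg (abs_nonneg a) (p - 1)⁻¹)
    (abs_nonneg b)
  rwa [Real.rpow_inv_rpow (abs_nonneg a) hp', ← Real.rpow_mul (abs_nonneg a),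
    inv_mul_eq_div] at young

lemma add_rpow_le_two_rpow_mul (hp : 1 ≤ p) (ha : 0 ≤ a) (hb : 0 ≤ b) :
    (a + b) ^ p ≤ 2 ^ (p - 1) * (a ^ p + b ^ p) := by
  lift a to NNReal using ha
  lift b to NNReal using hb
  exact_mod_cast NNReal.rpow_add_le_mul_rpow_add_rpow a b hp

lemma abs_sub_rpow_le_two_rpow_mul (hp : 1 ≤ p) (a b : ℝ) :
    |a - b| ^ p ≤ 2 ^ (p - 1) * (|a| ^ p + |b| ^ p) :=
  (Real.rpow_le_rpow (abs_nonneg _) (abs_sub a b) (by linarith)).trans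
    (add_rpow_le_two_rpow_mul hp (abs_nonneg a) (abs_nonneg b))

end Young

section CutoffProfile

variable {ε a b : ℝ}

/-- The value at distance `d` from the complement of a domain of a cutoff function vanishing where
`d ≤ ε` and increasing to `1` as `ε → 0`. Its increments are controlled by relative distances,
uniformly in `ε`. -/
def cutoffProfile (ε d : ℝ) : ℝ := 1 - ε / max d ε

lemma cutoffProfile_nonneg (hε : 0 < ε) (d : ℝ) : 0 ≤ cutoffProfile ε d :=
  sub_nonneg.2 ((div_le_one (lt_max_of_lt_right hε)).2 (le_max_right d ε))

lemma cutoffProfile_le_one (hε : 0 < ε) (d : ℝ) : cutoffProfile ε d ≤ 1 :=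
  sub_le_self 1 (div_nonneg hε.le (le_max_of_le_right hε.le))

lemma cutoffProfile_eq_zero (hε : 0 < ε) {d : ℝ} (hd : d ≤ ε) : cutoffProfile ε d = 0 := by
  rw [cutoffProfile, max_eq_right hd, div_self hε.ne', sub_self]

lemma monotone_cutoffProfile (hε : 0 < ε) : Monotone (cutoffProfile ε) := fun b a hba ↦ by
  have : 0 < max b ε := lt_max_of_lt_right hε
  unfold cutoffProfile
  gcongr

lemma cutoffProfile_sub_le (hε : 0 < ε) (ha : 0 < a) (hba : b ≤ a) :
    cutoffProfile ε a - cutoffProfile ε b ≤ (a - b) / a := by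
  rcases le_total a ε with h | h
  · rw [cutoffProfile_eq_zero hε h, cutoffProfile_eq_zero hε (hba.trans h), sub_self]
    exact div_nonneg (sub_nonneg.2 hba) ha.le
  have hM : 0 < max b ε := lt_max_of_lt_right hε
  calc cutoffProfile ε a - cutoffProfile ε b
      = ε / max b ε * ((a - max b ε) / a) := by
        rw [cutoffProfile, cutoffProfile, max_eq_left h]
        field_simp
        ring
    _ ≤ 1 * ((a - b) / a) := by
        gcongr
        · exact div_nonneg (sub_nonneg.2 (max_le hba h)) ha.le
        · exact (div_le_one hM).2 (le_max_right b ε)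
        · exact le_max_left b ε
    _ = (a - b) / a := one_mul _

lemma rpow_sub_rpow_le_mul_sub {q : ℝ} (hq : 1 ≤ q) (ha : 0 < a) (hb : 0 ≤ b) :
    a ^ q - b ^ q ≤ q * a ^ (q - 1) * (a - b) := by
  have bernoulli : 1 + q * (b / a - 1) ≤ (b / a) ^ q := by
    simpa using one_add_mul_self_le_rpow_one_add (s := b / a - 1)
      (by linarith [div_nonneg hb ha.le]) hq
  rw [Real.div_rpow hb ha.le, le_div_iff₀ (Real.rpow_pos_of_pos ha _)] at bernoulli
  have expand : (1 + q * (b / a - 1)) * a ^ q = a ^ q - q * a ^ (q - 1) * (a - b) := by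
    rw [Real.rpow_sub_one ha.ne']
    field_simp
    ring
  linarith

-- The power `q = p / (p - 1)` is chosen so that `(q - 1) * p = q`: raising the increment of `η ^ q`
-- to the power `p` leaves the factor `η ^ q`, which is what makes the Hardy term absorbable.
lemma cutoffProfile_rpow_sub_rpow_le {p r : ℝ} (hp : 1 < p) (hε : 0 < ε) (ha : 0 < a)
    (hba : b ≤ a) (hr : a - b ≤ r) :
    (cutoffProfile ε a ^ (p / (p - 1)) - cutoffProfile ε b ^ (p / (p - 1))) ^ p ≤
      (p / (p - 1)) ^ p * (cutoffProfile ε a ^ (p / (p - 1)) * min 1 (r / a) ^ p) := by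
  have hp₁ : 0 < p - 1 := sub_pos.2 hp
  have hp₀ : 0 < p := by linarith
  set q := p / (p - 1) with hq
  have one_le_q : 1 ≤ q := by rw [hq, le_div_iff₀ hp₁]; linarith
  set A := cutoffProfile ε a
  set B := cutoffProfile ε b
  have hB₀ : 0 ≤ B := cutoffProfile_nonneg hε b
  have hBA : B ≤ A := monotone_cutoffProfile hε hba
  have hr₀ : 0 ≤ r := (sub_nonneg.2 hba).trans hr
  rcases (hB₀.trans hBA).eq_or_lt with hA₀ | hA₀
  · rw [le_antisymm (hBA.trans hA₀.ge) hB₀, ← hA₀, sub_self, Real.zero_rpow hp₀.ne',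
      Real.zero_rpow (by linarith)]
    simp
  have increment_le : A - B ≤ min 1 (r / a) :=
    le_min (by linarith [cutoffProfile_le_one hε a])
      ((cutoffProfile_sub_le hε ha hba).trans (by gcongr))
  calc (A ^ q - B ^ q) ^ p
      ≤ (q * A ^ (q - 1) * min 1 (r / a)) ^ p := by
        gcongr
        · exact sub_nonneg.2 (Real.rpow_le_rpow hB₀ hBA (by linarith))
        · exact (rpow_sub_rpow_le_mul_sub one_le_q hA₀ hB₀).trans (by gcongr)
    _ = q ^ p * (A ^ ((q - 1) * p) * min 1 (r / a) ^ p) := by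
        rw [Real.mul_rpow (by positivity) (by positivity),
          Real.mul_rpow (by positivity) (by positivity), ← Real.rpow_mul hA₀.le, mul_assoc]
    _ = q ^ p * (A ^ q * min 1 (r / a) ^ p) := by
        rw [show (q - 1) * p = q by rw [hq]; field_simp; ring]

lemma tendsto_cutoffProfile {d : ℝ} (hd : 0 < d) {ε : ℕ → ℝ} (hε : Tendsto ε atTop (𝓝 0)) :
    Tendsto (fun k ↦ cutoffProfile (ε k) d) atTop (𝓝 1) := by
  have hmax : Tendsto (fun k ↦ max d (ε k)) atTop (𝓝 (max d 0)) := tendsto_const_nhds.max hε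
  rw [max_eq_left hd.le] at hmax
  simpa [cutoffProfile] using (hε.div hmax hd.ne').const_sub 1

end CutoffProfile

section Cutoff

variable {X : Type*} [PseudoMetricSpace X] {p R ε : ℝ} {x₀ x y : X}

/-- The cutoff function of the ball `B_R(x₀)` used to localise test functions; it is supported in
`closedBall x₀ (R - ε)`. -/
def cutoff (p : ℝ) (x₀ : X) (R ε : ℝ) (x : X) : ℝ :=
  cutoffProfile ε (R - dist x x₀) ^ (p / (p - 1))

/-- The distance from `x` to `y` relative to the distance from `x` to the boundary of `B_R(x₀)`,
truncated at `1`. -/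
def relDist (x₀ : X) (R : ℝ) (x y : X) : ℝ :=
  min 1 (dist x y / (R - dist x x₀))

lemma relDist_nonneg (hx : x ∈ ball x₀ R) : 0 ≤ relDist x₀ R x y :=
  le_min zero_le_one (div_nonneg dist_nonneg (sub_pos.2 hx).le)

@[fun_prop]
lemma measurable_relDist [MeasurableSpace X] [OpensMeasurableSpace X] [SecondCountableTopology X]
    {Y : Type*} [MeasurableSpace Y] {f g : Y → X} (hf : Measurable f) (hg : Measurable g) :
    Measurable fun a ↦ relDist x₀ R (f a) (g a) := by
  unfold relDist
  fun_prop

lemma measurable_cutoff [MeasurableSpace X] [OpensMeasurableSpace X] :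
    Measurable (cutoff p x₀ R ε) := by
  have : Measurable fun x ↦ dist x x₀ := (continuous_id.dist continuous_const).measurable
  unfold cutoff cutoffProfile
  fun_prop

lemma cutoff_nonneg (hε : 0 < ε) (x : X) : 0 ≤ cutoff p x₀ R ε x :=
  Real.rpow_nonneg (cutoffProfile_nonneg hε _) _

lemma cutoff_le_one (hp : 1 < p) (hε : 0 < ε) (x : X) : cutoff p x₀ R ε x ≤ 1 :=
  Real.rpow_le_one (cutoffProfile_nonneg hε _) (cutoffProfile_le_one hε _)
    (div_nonneg (by linarith) (by linarith))

lemma cutoff_eq_zero_of_notMem_closedBall (hp : 1 < p) (hε : 0 < ε)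
    (hx : x ∉ closedBall x₀ (R - ε)) : cutoff p x₀ R ε x = 0 := by
  rw [mem_closedBall, not_le] at hx
  rw [cutoff, cutoffProfile_eq_zero hε (by linarith),
    Real.zero_rpow (div_pos (by linarith) (by linarith)).ne']

lemma cutoff_eq_zero_of_notMem_ball (hp : 1 < p) (hε : 0 < ε) (hx : x ∉ ball x₀ R) :
    cutoff p x₀ R ε x = 0 :=
  cutoff_eq_zero_of_notMem_closedBall hp hε
    fun h ↦ hx (closedBall_subset_ball (by linarith) h)

lemma cutoff_le_cutoff_of_dist_le (hp : 1 < p) (hε : 0 < ε) (h : dist x x₀ ≤ dist y x₀) :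
    cutoff p x₀ R ε y ≤ cutoff p x₀ R ε x :=
  Real.rpow_le_rpow (cutoffProfile_nonneg hε _) (monotone_cutoffProfile hε (by linarith))
    (div_nonneg (by linarith) (by linarith))

lemma cutoff_sub_rpow_le (hp : 1 < p) (hε : 0 < ε) (h : dist x x₀ ≤ dist y x₀) :
    (cutoff p x₀ R ε x - cutoff p x₀ R ε y) ^ p ≤
      (p / (p - 1)) ^ p * (cutoff p x₀ R ε x * relDist x₀ R x y ^ p) := by
  by_cases hx : x ∈ ball x₀ R
  · refine cutoffProfile_rpow_sub_rpow_le hp hε (sub_pos.2 hx) (by linarith) ?_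
    linarith [dist_triangle y x x₀, dist_comm x y]
  · have hy : y ∉ ball x₀ R := fun hy ↦ hx (h.trans_lt hy)
    rw [cutoff_eq_zero_of_notMem_ball hp hε hx, cutoff_eq_zero_of_notMem_ball hp hε hy, sub_self,
      Real.zero_rpow (by linarith)]
    simp

lemma cutoff_mul_abs_rpow_mul_relDist_rpow_nonneg (hp : 1 < p) (hε : 0 < ε) (w : X → ℝ) (x y : X) :
    0 ≤ cutoff p x₀ R ε x * |w x| ^ p * relDist x₀ R x y ^ p := by
  by_cases hx : x ∈ ball x₀ R
  · have := relDist_nonneg (y := y) hx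
    have := cutoff_nonneg (p := p) (x₀ := x₀) (R := R) hε x
    positivity
  · simp [cutoff_eq_zero_of_notMem_ball hp hε hx]

lemma abs_sub_mul_cutoff_rpow_le (hp : 1 < p) (hε : 0 < ε) (w : X → ℝ)
    (h : dist x x₀ ≤ dist y x₀) :
    (|w x - w y| * cutoff p x₀ R ε y) ^ p ≤
      (ball x₀ R ×ˢ ball x₀ R).indicator (fun z ↦ |w z.1 - w z.2| ^ p) (x, y) := by
  by_cases hy : y ∈ ball x₀ R
  · have hx : x ∈ ball x₀ R := h.trans_lt hy
    rw [indicator_of_mem (mk_mem_prod hx hy)]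
    gcongr
    · exact mul_nonneg (abs_nonneg _) (cutoff_nonneg hε y)
    · exact mul_le_of_le_one_right (abs_nonneg _) (cutoff_le_one hp hε y)
  · rw [cutoff_eq_zero_of_notMem_ball hp hε hy, mul_zero, Real.zero_rpow (by linarith)]
    exact indicator_nonneg (fun _ _ ↦ by positivity) _

/-- A majorant of `|(ηw)(x) - (ηw)(y)|^p` at `z = (x, y)`, where `η` is a cutoff of the ball
`B_R(x₀)` and `h = η |w|^p`. -/
def cutoffMajorant (p : ℝ) (x₀ : X) (R : ℝ) (w h : X → ℝ) (z : X × X) : ℝ :=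
  2 ^ (p - 1) * ((ball x₀ R ×ˢ ball x₀ R).indicator (fun z ↦ |w z.1 - w z.2| ^ p) z +
    (p / (p - 1)) ^ p * (h z.1 * relDist x₀ R z.1 z.2 ^ p + h z.2 * relDist x₀ R z.2 z.1 ^ p))

lemma cutoffMajorant_le_cutoffMajorant {w h h' : X → ℝ} {z : X × X} (hp : 1 < p)
    (hz : z ∈ ball x₀ R ×ˢ ball x₀ R) (hh : ∀ x, h x ≤ h' x) :
    cutoffMajorant p x₀ R w h z ≤ cutoffMajorant p x₀ R w h' z := by
  have := relDist_nonneg (y := z.2) hz.1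
  have := relDist_nonneg (y := z.1) hz.2
  have : 0 < p - 1 := by linarith
  unfold cutoffMajorant
  gcongr <;> exact hh _

lemma cutoffMajorant_nonneg {w h : X → ℝ} {z : X × X} (hp : 1 < p)
    (hz : z ∈ ball x₀ R ×ˢ ball x₀ R) (hh : ∀ x, 0 ≤ h x) : 0 ≤ cutoffMajorant p x₀ R w h z := by
  have := relDist_nonneg (y := z.2) hz.1
  have := relDist_nonneg (y := z.1) hz.2
  have : 0 < p - 1 := by linarith
  have := hh z.1
  have := hh z.2
  rw [cutoffMajorant, indicator_of_mem hz]
  positivity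

lemma measurable_cutoffMajorant [MeasurableSpace X] [OpensMeasurableSpace X]
    [SecondCountableTopology X] {w h : X → ℝ} (hw : Measurable w) (hh : Measurable h) :
    Measurable (cutoffMajorant p x₀ R w h) := by
  have hB : MeasurableSet (ball x₀ R ×ˢ ball x₀ R) := measurableSet_ball.prod measurableSet_ball
  have := Measurable.indicator
    (f := fun z : X × X ↦ |w z.1 - w z.2| ^ p) (by fun_prop) hB
  unfold cutoffMajorant
  fun_prop

theorem abs_mul_cutoff_sub_rpow_le (hp : 1 < p) (hε : 0 < ε) (w : X → ℝ) (x y : X) :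
    |w x * cutoff p x₀ R ε x - w y * cutoff p x₀ R ε y| ^ p ≤
      cutoffMajorant p x₀ R w (fun x ↦ cutoff p x₀ R ε x * |w x| ^ p) (x, y) := by
  simp only [cutoffMajorant]
  wlog h : dist x x₀ ≤ dist y x₀ generalizing x y
  · convert this y x (not_le.1 h).le using 2
    · rw [abs_sub_comm]
    · rw [add_comm (cutoff p x₀ R ε x * _ * _)]
      by_cases hx : x ∈ ball x₀ R <;> by_cases hy : y ∈ ball x₀ R <;>
        simp [indicator, hx, hy, abs_sub_comm (w x)]
  have hdiff : 0 ≤ cutoff p x₀ R ε x - cutoff p x₀ R ε y :=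
    sub_nonneg.2 (cutoff_le_cutoff_of_dist_le hp hε h)
  have hy := cutoff_nonneg (p := p) (x₀ := x₀) (R := R) hε y
  have product_rule : |w x * cutoff p x₀ R ε x - w y * cutoff p x₀ R ε y| ≤
      |w x - w y| * cutoff p x₀ R ε y +
        |w x| * (cutoff p x₀ R ε x - cutoff p x₀ R ε y) := by
    rw [show w x * cutoff p x₀ R ε x - w y * cutoff p x₀ R ε y = (w x - w y) * cutoff p x₀ R ε y +
      w x * (cutoff p x₀ R ε x - cutoff p x₀ R ε y) by ring]
    exact (abs_add_le _ _).trans_eq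
      (by rw [abs_mul, abs_mul, abs_of_nonneg hy, abs_of_nonneg hdiff])
  have outer_le : (|w x| * (cutoff p x₀ R ε x - cutoff p x₀ R ε y)) ^ p ≤
      (p / (p - 1)) ^ p * (cutoff p x₀ R ε x * |w x| ^ p * relDist x₀ R x y ^ p) := by
    rw [Real.mul_rpow (abs_nonneg _) hdiff, mul_right_comm, ← mul_assoc, mul_comm]
    gcongr
    exact (cutoff_sub_rpow_le hp hε h).trans_eq (by ring)
  calc |w x * cutoff p x₀ R ε x - w y * cutoff p x₀ R ε y| ^ p
      ≤ (|w x - w y| * cutoff p x₀ R ε y +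
          |w x| * (cutoff p x₀ R ε x - cutoff p x₀ R ε y)) ^ p := by gcongr
    _ ≤ 2 ^ (p - 1) * ((|w x - w y| * cutoff p x₀ R ε y) ^ p +
          (|w x| * (cutoff p x₀ R ε x - cutoff p x₀ R ε y)) ^ p) :=
        add_rpow_le_two_rpow_mul hp.le (by positivity) (by positivity)
    _ ≤ _ := by
        gcongr
        · exact abs_sub_mul_cutoff_rpow_le hp hε w h
        · refine outer_le.trans ?_
          gcongr (p / (p - 1)) ^ p * ?_
          exact le_add_of_nonneg_right
            (cutoff_mul_abs_rpow_mul_relDist_rpow_nonneg hp hε w y x)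

lemma tendsto_cutoff (hx : x ∈ ball x₀ R) {ε : ℕ → ℝ} (hε : Tendsto ε atTop (𝓝 0)) :
    Tendsto (fun k ↦ cutoff p x₀ R (ε k) x) atTop (𝓝 1) := by
  simpa [cutoff] using (tendsto_cutoffProfile (sub_pos.2 hx) hε).rpow_const (Or.inl one_ne_zero)
    (p := p / (p - 1))

end Cutoff

section GagliardoMeasure

variable {X : Type*} [PseudoMetricSpace X] [SecondCountableTopology X] [MeasurableSpace X]
  [OpensMeasurableSpace X] {μ : Measure X} [SFinite μ] {α : ℝ}

/-- The measure `d(x, y)^{-α} dμ(x) dμ(y)` on the product space, with respect to which Gagliardo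
seminorms are `L^p` norms of differences. -/
def gagliardoMeasure (μ : Measure X) (α : ℝ) : Measure (X × X) :=
  (μ.prod μ).withDensity fun z ↦ ENNReal.ofReal (dist z.1 z.2 ^ α)⁻¹

lemma measurable_ofReal_dist_rpow_inv :
    Measurable fun z : X × X ↦ ENNReal.ofReal (dist z.1 z.2 ^ α)⁻¹ := by
  have : Measurable fun z : X × X ↦ dist z.1 z.2 := continuous_dist.measurable
  fun_prop

lemma setLIntegral_prod_gagliardoMeasure {A B : Set X} (hA : MeasurableSet A)
    (hB : MeasurableSet B) {F : X × X → ℝ≥0∞} (hF : Measurable F) :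
    ∫⁻ z in A ×ˢ B, F z ∂gagliardoMeasure μ α =
      ∫⁻ x in A, ∫⁻ y in B, ENNReal.ofReal (dist x y ^ α)⁻¹ * F (x, y) ∂μ ∂μ := by
  rw [gagliardoMeasure, restrict_withDensity (hA.prod hB),
    lintegral_withDensity_eq_lintegral_mul _ measurable_ofReal_dist_rpow_inv hF,
    setLIntegral_prod _ (measurable_ofReal_dist_rpow_inv.mul hF).aemeasurable]
  simp only [Pi.mul_apply]

lemma measurePreserving_swap_gagliardoMeasure :
    MeasurePreserving Prod.swap (gagliardoMeasure μ α) (gagliardoMeasure μ α) := by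
  refine ⟨measurable_swap, Measure.ext fun S hS ↦ ?_⟩
  rw [Measure.map_apply measurable_swap hS, gagliardoMeasure, withDensity_apply _ hS,
    withDensity_apply _ (measurable_swap hS),
    ← (Measure.measurePreserving_swap (μ := μ) (ν := μ)).setLIntegral_comp_preimage hS
      measurable_ofReal_dist_rpow_inv]
  simp only [Prod.fst_swap, Prod.snd_swap, dist_comm]

lemma lintegral_comp_swap_gagliardoMeasure (F : X × X → ℝ≥0∞) :
    ∫⁻ z, F z.swap ∂gagliardoMeasure μ α = ∫⁻ z, F z ∂gagliardoMeasure μ α :=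
  measurePreserving_swap_gagliardoMeasure.lintegral_comp_emb
    MeasurableEquiv.prodComm.measurableEmbedding F

lemma lintegral_gagliardoMeasure_le_of_comp_swap {A B : Set X} (hA : MeasurableSet A)
    (hB : MeasurableSet B) (hAB : A ⊆ B) {F : X × X → ℝ≥0∞} (hF : Measurable F)
    (F_swap : ∀ z, F z.swap = F z) (F_eq_zero : ∀ z, z.1 ∉ A → z.2 ∉ A → F z = 0) :
    ∫⁻ z, F z ∂gagliardoMeasure μ α ≤
      ∫⁻ z in B ×ˢ B, F z ∂gagliardoMeasure μ α +
        2 * ∫⁻ z in A ×ˢ Bᶜ, F z ∂gagliardoMeasure μ α := by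
  have hBB := hB.prod hB
  have hABc := hA.prod hB.compl
  calc ∫⁻ z, F z ∂gagliardoMeasure μ α
      ≤ ∫⁻ z, ((B ×ˢ B).indicator F z + ((A ×ˢ Bᶜ).indicator F z +
          (A ×ˢ Bᶜ).indicator F z.swap)) ∂gagliardoMeasure μ α := by
        refine lintegral_mono fun ⟨x, y⟩ ↦ ?_
        have := F_swap (x, y)
        have := F_eq_zero (x, y)
        have := @hAB x
        have := @hAB y
        by_cases x ∈ B <;> by_cases y ∈ B <;> by_cases x ∈ A <;> by_cases y ∈ A <;>
          simp_all [indicator]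
    _ = _ := by
        rw [lintegral_add_left (hF.indicator hBB), lintegral_add_left (hF.indicator hABc),
          lintegral_comp_swap_gagliardoMeasure ((A ×ˢ Bᶜ).indicator F), lintegral_indicator hBB,
          lintegral_indicator hABc, two_mul]

end GagliardoMeasure

section HardyIntegral

variable {X : Type*} [PseudoMetricSpace X] [MeasurableSpace X] (μ : Measure X) {x₀ : X} {σ R : ℝ}

/-- The integral of `h` over `B_R(x₀)` against the `(-σ)`-th power of the distance to the boundary,
as in the left-hand side of fractional Hardy inequalities. -/
def hardyIntegral (σ : ℝ) (x₀ : X) (R : ℝ) (h : X → ℝ≥0∞) : ℝ≥0∞ :=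
  ∫⁻ x in ball x₀ R, h x * ENNReal.ofReal ((R - dist x x₀) ^ (-σ)) ∂μ

variable [OpensMeasurableSpace X]

lemma lintegral_le_rpow_mul_hardyIntegral (hσ : 0 ≤ σ) {h : X → ℝ≥0∞} (hh : Measurable h) :
    ∫⁻ x in ball x₀ R, h x ∂μ ≤ ENNReal.ofReal (R ^ σ) * hardyIntegral μ σ x₀ R h := by
  rw [hardyIntegral, ← lintegral_const_mul _ (by fun_prop)]
  refine setLIntegral_mono' measurableSet_ball fun x hx ↦ ?_
  have dist_lt : 0 < R - dist x x₀ := sub_pos.2 (mem_ball.1 hx)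
  have one_le : 1 ≤ R ^ σ * (R - dist x x₀) ^ (-σ) := by
    rw [Real.rpow_neg dist_lt.le, ← div_eq_mul_inv, one_le_div (by positivity)]
    exact Real.rpow_le_rpow dist_lt.le (sub_le_self _ dist_nonneg) hσ
  rw [mul_left_comm, ← ENNReal.ofReal_mul' (by positivity)]
  exact le_mul_of_one_le_right' (ENNReal.one_le_ofReal.2 one_le)

end HardyIntegral

section ExteriorKernel

lemma exists_ball_subset_ball_diff_ball {E : Type*} [NormedAddCommGroup E] [NormedSpace ℝ E]
    [Nontrivial E] {x₀ x : E} {R : ℝ} (hx : x ∈ ball x₀ R) :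
    ∃ c : E, dist c x = 3 / 2 * (R - dist x x₀) ∧
      ball c ((R - dist x x₀) / 2) ⊆ ball x₀ (2 * R) \ ball x₀ R := by
  have hr : 0 < R - dist x x₀ := sub_pos.2 hx
  set r := R - dist x x₀ with hr_def
  obtain ⟨e, norm_e, hxe⟩ : ∃ e : E, ‖e‖ = 1 ∧ x - x₀ = dist x x₀ • e := by
    rcases eq_or_ne x x₀ with rfl | hne
    · obtain ⟨e, norm_e⟩ := exists_norm_eq E zero_le_one
      exact ⟨e, norm_e, by simp⟩
    · have : ‖x - x₀‖ ≠ 0 := norm_ne_zero_iff.2 (sub_ne_zero.2 hne)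
      exact ⟨‖x - x₀‖⁻¹ • (x - x₀), by simp [norm_smul, this], by
        rw [dist_eq_norm, smul_inv_smul₀ this]⟩
  set c := x₀ + (R + r / 2) • e with hc
  have dist_x₀ : dist c x₀ = R + r / 2 := by
    rw [hc, dist_eq_norm, add_sub_cancel_left, norm_smul, norm_e, mul_one, Real.norm_of_nonneg]
    linarith [dist_nonneg (x := x) (y := x₀)]
  refine ⟨c, ?_, fun y hy ↦ ⟨?_, fun hyR ↦ ?_⟩⟩
  · have : c - x = (3 / 2 * r) • e := by
      rw [show c - x = (R + r / 2) • e - (x - x₀) by rw [hc]; abel, hxe, ← sub_smul, hr_def]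
      ring_nf
    rw [dist_eq_norm, this, norm_smul, norm_e, mul_one, Real.norm_of_nonneg (by linarith)]
  · rw [mem_ball] at hy ⊢
    linarith [dist_triangle y c x₀, dist_nonneg (x := x) (y := x₀)]
  · rw [mem_ball] at hy hyR
    linarith [dist_triangle c y x₀, dist_comm c y]

variable {E : Type*} [NormedAddCommGroup E] [NormedSpace ℝ E] [MeasurableSpace E]
  (μ : Measure E) [μ.IsAddHaarMeasure] {p σ R : ℝ} {x₀ x : E}

local notation "d" => Module.finrank ℝ E

/-- The constant in the lower bound of the kernel over `B_{2R} \ B_R`: the measure of a ball of half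
the distance to the boundary, times the kernel at twice that distance, after rescaling. -/
def exteriorKernelConst (σ : ℝ) : ℝ≥0∞ :=
  μ (ball 0 1) * ENNReal.ofReal ((1 / 2) ^ (d : ℝ) * 2 ^ (-(d + σ)))

lemma exteriorKernelConst_pos : 0 < exteriorKernelConst μ σ :=
  ENNReal.mul_pos (measure_ball_pos μ 0 one_pos).ne' (ENNReal.ofReal_pos.2 (by positivity)).ne'

variable [FiniteDimensional ℝ E]

lemma exteriorKernelConst_lt_top : exteriorKernelConst μ σ < ⊤ :=
  ENNReal.mul_lt_top measure_ball_lt_top ENNReal.ofReal_lt_top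

variable [BorelSpace E]

/-- The integral of the kernel `‖z‖ ^ (-(d + σ))`, truncated by the factor `min 1 ‖z‖ ^ p` near its
singularity. -/
def truncatedKernelIntegral (p σ : ℝ) : ℝ≥0∞ :=
  ∫⁻ z, ENNReal.ofReal ((‖z‖ ^ (d + σ))⁻¹ * min 1 ‖z‖ ^ p) ∂μ

lemma truncatedKernelIntegral_lt_top [Nontrivial E] (hσ : 0 < σ) (hσp : σ < p) :
    truncatedKernelIntegral μ p σ < ⊤ := by
  have radial_power : ∀ r : ℝ, 0 < r → r ^ (d - 1) * (r ^ (d + σ))⁻¹ = r ^ (-1 - σ) := by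
    intro r hr
    rw [← Real.rpow_natCast, ← Real.rpow_neg hr.le, ← Real.rpow_add hr,
      Nat.cast_sub Module.finrank_pos]
    congr 1
    push_cast
    ring
  refine Integrable.lintegral_lt_top
    ((integrable_fun_norm_addHaar μ (f := fun r : ℝ ↦ (r ^ (d + σ))⁻¹ * min 1 r ^ p)).2 ?_)
  rw [← Ioc_union_Ioi_eq_Ioi zero_le_one]
  refine IntegrableOn.union ?_ ?_
  · have near : IntegrableOn (fun r : ℝ ↦ r ^ (p - 1 - σ)) (Ioc 0 1) := by
      rw [← intervalIntegrable_iff_integrableOn_Ioc_of_le zero_le_one]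
      exact intervalIntegral.intervalIntegrable_rpow' (by linarith)
    refine near.congr_fun (fun r hr ↦ ?_) measurableSet_Ioc
    simp only [smul_eq_mul]
    rw [min_eq_right hr.2, ← mul_assoc, radial_power r hr.1, ← Real.rpow_add hr.1]
    ring_nf
  · have far : IntegrableOn (fun r : ℝ ↦ r ^ (-1 - σ)) (Ioi 1) :=
      integrableOn_Ioi_rpow_of_lt (by linarith) one_pos
    refine far.congr_fun (fun r (hr : 1 < r) ↦ ?_) measurableSet_Ioi
    simp only [smul_eq_mul]
    rw [min_eq_left hr.le, Real.one_rpow, mul_one, radial_power r (by linarith)]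

lemma lintegral_truncatedKernel (p σ : ℝ) (x : E) {r : ℝ} (hr : 0 < r) :
    ∫⁻ y, ENNReal.ofReal ((dist x y ^ (d + σ))⁻¹ * min 1 (dist x y / r) ^ p) ∂μ =
      ENNReal.ofReal (r ^ (-σ)) * truncatedKernelIntegral μ p σ := by
  set K : E → ℝ≥0∞ := fun z ↦ ENNReal.ofReal ((‖z‖ ^ (d + σ))⁻¹ * min 1 ‖z‖ ^ p) with hK
  have measurable_K : Measurable K := by fun_prop
  have rescale : ∀ y, ENNReal.ofReal ((dist x y ^ (d + σ))⁻¹ * min 1 (dist x y / r) ^ p) =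
      ENNReal.ofReal (r ^ (-(d + σ))) * K (r⁻¹ • (y - x)) := by
    intro y
    rw [hK, ← ENNReal.ofReal_mul (by positivity)]
    simp only [norm_smul, norm_inv, Real.norm_of_nonneg hr.le, ← dist_eq_norm, dist_comm y x,
      inv_mul_eq_div]
    rw [Real.div_rpow dist_nonneg hr.le, Real.rpow_neg hr.le]
    field_simp
  have haar_scaling : ∫⁻ y, K (r⁻¹ • (y - x)) ∂μ =
      ENNReal.ofReal (r ^ (d : ℝ)) * ∫⁻ z, K z ∂μ := by
    rw [lintegral_sub_right_eq_self (fun y ↦ K (r⁻¹ • y)) x,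
      ← lintegral_map measurable_K (measurable_const_smul r⁻¹),
      Measure.map_addHaar_smul _ (inv_ne_zero hr.ne'), lintegral_smul_measure,
      abs_of_pos (by positivity), inv_pow, inv_inv, Real.rpow_natCast, smul_eq_mul]
  simp_rw [rescale]
  rw [lintegral_const_mul _ (by fun_prop), haar_scaling, ← mul_assoc,
    ← ENNReal.ofReal_mul (by positivity), ← Real.rpow_add hr]
  simp only [neg_add_rev, neg_add_cancel_right, truncatedKernelIntegral, hK]

lemma setLIntegral_mul_relDist_rpow (p σ : ℝ) (x₀ : E) (R : ℝ) {h : E → ℝ≥0∞}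
    (hh : Measurable h) :
    ∫⁻ z in ball x₀ R ×ˢ univ, h z.1 * ENNReal.ofReal (relDist x₀ R z.1 z.2 ^ p)
        ∂gagliardoMeasure μ (d + σ) =
      hardyIntegral μ σ x₀ R h * truncatedKernelIntegral μ p σ := by
  rw [setLIntegral_prod_gagliardoMeasure measurableSet_ball .univ (by fun_prop), hardyIntegral,
    ← lintegral_mul_const _ (by fun_prop)]
  refine setLIntegral_congr_fun measurableSet_ball fun x hx ↦ ?_
  rw [Measure.restrict_univ, mul_assoc, ← lintegral_truncatedKernel μ p σ x (sub_pos.2 hx),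
    ← lintegral_const_mul _ (by fun_prop)]
  refine lintegral_congr fun y ↦ ?_
  rw [mul_left_comm, ← ENNReal.ofReal_mul (by positivity), relDist]

lemma exteriorKernelConst_mul_le [Nontrivial E] (hσ : 0 ≤ σ) (hx : x ∈ ball x₀ R) :
    exteriorKernelConst μ σ * ENNReal.ofReal ((R - dist x x₀) ^ (-σ)) ≤
      ∫⁻ y in ball x₀ (2 * R) \ ball x₀ R, ENNReal.ofReal (dist x y ^ (d + σ))⁻¹ ∂μ := by
  have hr : 0 < R - dist x x₀ := sub_pos.2 hx
  obtain ⟨c, dist_c, c_subset⟩ := exists_ball_subset_ball_diff_ball hx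
  set r := R - dist x x₀
  calc exteriorKernelConst μ σ * ENNReal.ofReal (r ^ (-σ))
      = ENNReal.ofReal ((2 * r) ^ (-(d + σ))) * μ (ball c (r / 2)) := by
        rw [exteriorKernelConst, Measure.addHaar_ball μ c (by positivity), mul_assoc,
          ← ENNReal.ofReal_mul (by positivity), mul_comm (μ _), ← mul_assoc,
          ← ENNReal.ofReal_mul (by positivity), ← Real.rpow_natCast,
          Real.mul_rpow (by norm_num) hr.le, div_eq_mul_one_div r 2,
          Real.mul_rpow hr.le (by norm_num), show -σ = -(d + σ) + d by ring, Real.rpow_add hr]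
        ring_nf
    _ = ∫⁻ _ in ball c (r / 2), ENNReal.ofReal ((2 * r) ^ (-(d + σ))) ∂μ :=
        (setLIntegral_const _ _).symm
    _ ≤ ∫⁻ y in ball c (r / 2), ENNReal.ofReal (dist x y ^ (d + σ))⁻¹ ∂μ := by
        refine setLIntegral_mono' measurableSet_ball fun y hy ↦ ENNReal.ofReal_le_ofReal ?_
        rw [mem_ball, dist_comm] at hy
        have dist_le : dist x y ≤ 2 * r := by
          linarith [dist_triangle x c y, dist_comm x c]
        have dist_pos : 0 < dist x y := by
          linarith [dist_triangle c y x, dist_comm y x]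
        rw [← Real.rpow_neg dist_pos.le]
        exact Real.rpow_le_rpow_of_nonpos dist_pos dist_le (neg_nonpos.2 (by positivity))
    _ ≤ ∫⁻ y in ball x₀ (2 * R) \ ball x₀ R, ENNReal.ofReal (dist x y ^ (d + σ))⁻¹ ∂μ :=
        lintegral_mono_set c_subset

lemma exteriorKernelConst_mul_hardyIntegral_le [Nontrivial E] (hσ : 0 ≤ σ) {h : E → ℝ≥0∞}
    (hh : Measurable h) :
    exteriorKernelConst μ σ * hardyIntegral μ σ x₀ R h ≤
      ∫⁻ z in ball x₀ R ×ˢ (ball x₀ (2 * R) \ ball x₀ R), h z.1 ∂gagliardoMeasure μ (d + σ) := by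
  rw [setLIntegral_prod_gagliardoMeasure measurableSet_ball
    (measurableSet_ball.diff measurableSet_ball) (by fun_prop), hardyIntegral,
    ← lintegral_const_mul _ (by fun_prop)]
  refine setLIntegral_mono' measurableSet_ball fun x hx ↦ ?_
  dsimp only
  rw [lintegral_mul_const _ (by fun_prop), mul_left_comm, mul_comm]
  gcongr
  exact exteriorKernelConst_mul_le μ hσ hx

end ExteriorKernel

section LebesgueBounds

variable {X : Type*} [MeasurableSpace X] {μ : Measure X} {p : ℝ} {g h : X → ℝ}

lemma lintegral_abs_sub_rpow_lt_top (hp : 1 ≤ p) (hg : Measurable g)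
    (hgp : ∫⁻ x, ENNReal.ofReal (|g x| ^ p) ∂μ < ⊤)
    (hhp : ∫⁻ x, ENNReal.ofReal (|h x| ^ p) ∂μ < ⊤) :
    ∫⁻ x, ENNReal.ofReal (|g x - h x| ^ p) ∂μ < ⊤ :=
  calc ∫⁻ x, ENNReal.ofReal (|g x - h x| ^ p) ∂μ
      ≤ ∫⁻ x, ENNReal.ofReal (2 ^ (p - 1)) *
          (ENNReal.ofReal (|g x| ^ p) + ENNReal.ofReal (|h x| ^ p)) ∂μ := by
        refine lintegral_mono fun x ↦ ?_
        rw [← ENNReal.ofReal_add (by positivity) (by positivity),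
          ← ENNReal.ofReal_mul (by positivity)]
        exact ENNReal.ofReal_le_ofReal (abs_sub_rpow_le_two_rpow_mul hp _ _)
    _ = ENNReal.ofReal (2 ^ (p - 1)) *
          (∫⁻ x, ENNReal.ofReal (|g x| ^ p) ∂μ + ∫⁻ x, ENNReal.ofReal (|h x| ^ p) ∂μ) := by
        rw [lintegral_const_mul' _ _ ENNReal.ofReal_ne_top, lintegral_add_left (by fun_prop)]
    _ < ⊤ := ENNReal.mul_lt_top ENNReal.ofReal_lt_top (ENNReal.add_lt_top.2 ⟨hgp, hhp⟩)

lemma lintegral_abs_rpow_sub_one_mul_abs_lt_top (hp : 1 ≤ p) (hg : Measurable g)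
    (hgp : ∫⁻ x, ENNReal.ofReal (|g x| ^ p) ∂μ < ⊤)
    (hhp : ∫⁻ x, ENNReal.ofReal (|h x| ^ p) ∂μ < ⊤) :
    ∫⁻ x, ENNReal.ofReal (|g x| ^ (p - 1) * |h x|) ∂μ < ⊤ :=
  calc ∫⁻ x, ENNReal.ofReal (|g x| ^ (p - 1) * |h x|) ∂μ
      ≤ ∫⁻ x, ENNReal.ofReal (|g x| ^ p) + ENNReal.ofReal (|h x| ^ p) ∂μ := by
        refine lintegral_mono fun x ↦ ?_
        rw [← ENNReal.ofReal_add (by positivity) (by positivity)]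
        exact ENNReal.ofReal_le_ofReal
          (by simpa using rpow_sub_one_mul_le hp one_pos (abs_nonneg (g x)) (abs_nonneg (h x)))
    _ = ∫⁻ x, ENNReal.ofReal (|g x| ^ p) ∂μ + ∫⁻ x, ENNReal.ofReal (|h x| ^ p) ∂μ :=
        lintegral_add_left (by fun_prop) _
    _ < ⊤ := ENNReal.add_lt_top.2 ⟨hgp, hhp⟩

lemma lintegral_abs_mul_abs_le {t : ℝ} (hp : 1 < p) (ht : 0 < t) (hg : Measurable g) :
    ∫⁻ x, ENNReal.ofReal (|g x| * |h x|) ∂μ ≤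
      ENNReal.ofReal t * ∫⁻ x, ENNReal.ofReal (|g x| ^ (p / (p - 1))) ∂μ +
        ENNReal.ofReal (t ^ (-(p - 1))) * ∫⁻ x, ENNReal.ofReal (|h x| ^ p) ∂μ := by
  rw [← lintegral_const_mul' _ _ ENNReal.ofReal_ne_top,
    ← lintegral_const_mul' _ _ ENNReal.ofReal_ne_top, ← lintegral_add_left (by fun_prop)]
  refine lintegral_mono fun x ↦ ?_
  rw [← ENNReal.ofReal_mul ht.le, ← ENNReal.ofReal_mul (by positivity),
    ← ENNReal.ofReal_add (by positivity) (by positivity)]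
  exact ENNReal.ofReal_le_ofReal (abs_mul_abs_le_rpow hp ht _ _)

end LebesgueBounds

section LocalWeakSolution

lemma one_add_norm_le_mul_dist {E : Type*} [SeminormedAddCommGroup E] {M ε : ℝ} {x y : E}
    (hε : 0 < ε) (hx : ‖x‖ ≤ M) (hxy : ε ≤ dist x y) :
    1 + ‖y‖ ≤ ((1 + M) / ε + 1) * dist x y := by
  have hy : ‖y‖ ≤ ‖x‖ + dist x y := by
    simpa [dist_eq_norm, norm_sub_rev] using norm_le_norm_add_norm_sub x y
  have hM : 1 + M ≤ (1 + M) / ε * dist x y := by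
    rw [div_mul_eq_mul_div, le_div_iff₀ hε]
    have := norm_nonneg x
    gcongr
    linarith
  linarith

lemma exists_forall_dist_rpow_inv_le {E : Type*} [SeminormedAddCommGroup E] {K : Set E} {ε α : ℝ}
    (hK : Bornology.IsBounded K) (hε : 0 < ε) (hα : 0 ≤ α) :
    ∃ N, 0 ≤ N ∧ ∀ x ∈ K, ∀ y, ε ≤ dist x y → (dist x y ^ α)⁻¹ ≤ N * ((1 + ‖y‖) ^ α)⁻¹ := by
  obtain ⟨M, M_pos, hM⟩ := hK.exists_pos_norm_le
  refine ⟨((1 + M) / ε + 1) ^ α, by positivity, fun x hx y hxy ↦ ?_⟩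
  have dist_pos : 0 < dist x y := hε.trans_le hxy
  rw [← div_eq_mul_inv, le_div_iff₀ (by positivity), inv_mul_le_iff₀ (by positivity), mul_comm,
    ← Real.mul_rpow (by positivity) dist_nonneg]
  exact Real.rpow_le_rpow (by positivity) (one_add_norm_le_mul_dist hε (hM x hx) hxy) hα

/-- The measure `|x - y|^{-(n+sp)} dx dy` on `ℝⁿ × ℝⁿ`, for which `gagliardoE` is the `L^p` norm of
the difference `u(x) - u(y)`. -/
abbrev fractionalMeasure (n : ℕ) (s p : ℝ) :
    Measure (EuclideanSpace ℝ (Fin n) × EuclideanSpace ℝ (Fin n)) :=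
  gagliardoMeasure volume (n + s * p)

variable {n : ℕ} {s p : ℝ} {D Ω K : Set (EuclideanSpace ℝ (Fin n))}
  {f u v φ : EuclideanSpace ℝ (Fin n) → ℝ}

lemma gagliardoE_eq (hD : MeasurableSet D) (hu : Measurable u) :
    gagliardoE n s p D u =
      ∫⁻ z in D ×ˢ D, ENNReal.ofReal (|u z.1 - u z.2| ^ p) ∂fractionalMeasure n s p := by
  rw [setLIntegral_prod_gagliardoMeasure hD hD (by fun_prop), gagliardoE]
  simp only [div_eq_inv_mul]
  congr! with _ y
  exact ENNReal.ofReal_mul (by positivity)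

lemma gagliardoE_eq_lintegral_indicator (hD : MeasurableSet D) (hu : Measurable u) :
    gagliardoE n s p D u =
      ∫⁻ z, ENNReal.ofReal ((D ×ˢ D).indicator (fun z ↦ |u z.1 - u z.2| ^ p) z)
        ∂fractionalMeasure n s p := by
  rw [gagliardoE_eq hD hu, ← lintegral_indicator (hD.prod hD)]
  exact lintegral_congr fun z ↦ congrFun (indicator_comp_of_zero ENNReal.ofReal_zero) z

lemma gagliardoE_univ (hu : Measurable u) :
    gagliardoE n s p univ u =
      ∫⁻ z, ENNReal.ofReal (|u z.1 - u z.2| ^ p) ∂fractionalMeasure n s p := by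
  rw [gagliardoE_eq .univ hu, univ_prod_univ, Measure.restrict_univ]

lemma gagliardoE_mono (h : D ⊆ Ω) : gagliardoE n s p D u ≤ gagliardoE n s p Ω u :=
  (lintegral_mono fun _ ↦ lintegral_mono_set h).trans (lintegral_mono_set h)

lemma gagliardoE_congr_ae (h : u =ᵐ[volume] v) : gagliardoE n s p D u = gagliardoE n s p D v := by
  refine lintegral_congr_ae ?_
  filter_upwards [ae_restrict_of_ae h] with x hx
  refine lintegral_congr_ae ?_
  filter_upwards [ae_restrict_of_ae h] with y hy
  rw [hx, hy]

lemma gagliardoE_sub_lt_top (hp : 1 ≤ p) (hD : MeasurableSet D) (hu : Measurable u)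
    (hv : Measurable v) (hug : gagliardoE n s p D u < ⊤) (hvg : gagliardoE n s p D v < ⊤) :
    gagliardoE n s p D (fun x ↦ u x - v x) < ⊤ := by
  rw [gagliardoE_eq hD (by fun_prop)] at *
  simpa only [sub_sub_sub_comm] using lintegral_abs_sub_rpow_lt_top hp (by fun_prop) hug hvg

namespace IsLocalWeakSolution

lemma mono (h : IsLocalWeakSolution n p s Ω f u) (hD : D ⊆ Ω) :
    IsLocalWeakSolution n p s D f u := by
  obtain ⟨measurable, local_finite, tail, weak⟩ := h
  refine ⟨measurable, fun K hK ↦ local_finite K (hK.trans hD), tail, ?_⟩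
  rintro φ hφ ⟨K, hK, hKD, hφK⟩ hφp hφg
  rw [weak φ hφ ⟨K, hK, hKD.trans hD, hφK⟩ hφp hφg]
  have eq_integral {A : Set (EuclideanSpace ℝ (Fin n))} (hA : K ⊆ A) :
      ∫ x in A, f x * φ x = ∫ x, f x * φ x := by
    refine setIntegral_eq_integral_of_ae_compl_eq_zero ?_
    filter_upwards [hφK] with x hx hxA
    rw [hx (fun hxK ↦ hxA (hA hxK)), mul_zero]
  rw [eq_integral (hKD.trans hD), eq_integral hKD]

lemma congr_ae (h : IsLocalWeakSolution n p s D f u) (hv : Measurable v) (huv : u =ᵐ[volume] v) :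
    IsLocalWeakSolution n p s D f v := by
  obtain ⟨-, local_finite, tail, weak⟩ := h
  refine ⟨hv, fun K hKD hK ↦ ?_, ?_, fun φ hφ hφK hφp hφg ↦ ?_⟩
  · rw [← gagliardoE_congr_ae huv]
    refine ⟨?_, (local_finite K hKD hK).2⟩
    convert (local_finite K hKD hK).1 using 1
    refine lintegral_congr_ae ?_
    filter_upwards [ae_restrict_of_ae huv] with x hx
    rw [hx]
  · convert tail using 1
    refine lintegral_congr_ae ?_
    filter_upwards [huv] with x hx
    rw [hx]
  · rw [← weak φ hφ hφK hφp hφg]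
    refine integral_congr_ae ?_
    filter_upwards [huv] with x hx
    refine integral_congr_ae ?_
    filter_upwards [huv] with y hy
    rw [hx, hy]

end IsLocalWeakSolution

lemma lintegral_rpow_add_rpow_mul_lt_top (hp : 1 ≤ p)
    (hK : volume K < ⊤) (hu : Measurable u) (hφ : Measurable φ)
    (hup : ∫⁻ x in K, ENNReal.ofReal (|u x| ^ p) < ⊤)
    (hφp : ∫⁻ x in K, ENNReal.ofReal (|φ x| ^ p) < ⊤) (hsp : 0 < s * p)
    (tail : ∫⁻ x, ENNReal.ofReal (|u x| ^ (p - 1) / (1 + ‖x‖) ^ ((n : ℝ) + s * p)) < ⊤) :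
    ∫⁻ x in K, ∫⁻ y, ENNReal.ofReal
      (((1 + ‖y‖) ^ ((n : ℝ) + s * p))⁻¹ * ((|u x| ^ (p - 1) + |u y| ^ (p - 1)) * |φ x|)) < ⊤ := by
  have kernel_lt_top :
      ∫⁻ y : EuclideanSpace ℝ (Fin n), ENNReal.ofReal ((1 + ‖y‖) ^ (-((n : ℝ) + s * p))) < ⊤ :=
    finite_integral_one_add_norm (by simpa using hsp)
  have mixed_lt_top : ∫⁻ x in K, ENNReal.ofReal (|u x| ^ (p - 1) * |φ x|) < ⊤ :=
    lintegral_abs_rpow_sub_one_mul_abs_lt_top hp hu hup hφp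
  have abs_lt_top : ∫⁻ x in K, ENNReal.ofReal |φ x| < ⊤ := by
    simpa using lintegral_abs_rpow_sub_one_mul_abs_lt_top (μ := volume.restrict K) (g := 1) hp
      measurable_one (by simpa using hK) hφp
  calc _ = ∫⁻ x in K, (ENNReal.ofReal (|u x| ^ (p - 1) * |φ x|) *
            (∫⁻ y : EuclideanSpace ℝ (Fin n),
              ENNReal.ofReal ((1 + ‖y‖) ^ (-((n : ℝ) + s * p)))) +
          ENNReal.ofReal |φ x| *
            ∫⁻ y, ENNReal.ofReal (|u y| ^ (p - 1) / (1 + ‖y‖) ^ ((n : ℝ) + s * p))) := by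
        refine lintegral_congr fun x ↦ ?_
        rw [← lintegral_const_mul _ (by fun_prop), ← lintegral_const_mul _ (by fun_prop),
          ← lintegral_add_left (by fun_prop)]
        refine lintegral_congr fun y ↦ ?_
        rw [← ENNReal.ofReal_mul (by positivity), ← ENNReal.ofReal_mul (by positivity),
          ← ENNReal.ofReal_add (by positivity) (by positivity), Real.rpow_neg (by positivity)]
        ring_nf
    _ < ⊤ := by
        rw [lintegral_add_left (by fun_prop), lintegral_mul_const _ (by fun_prop),
          lintegral_mul_const _ (by fun_prop)]
        exact ENNReal.add_lt_top.2
          ⟨ENNReal.mul_lt_top mixed_lt_top kernel_lt_top, ENNReal.mul_lt_top abs_lt_top tail⟩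

lemma lintegral_prod_far_lt_top {A : Set (EuclideanSpace ℝ (Fin n))} {ε : ℝ} (hp : 1 ≤ p)
    (hsp : 0 < s * p) (hK : IsCompact K) (hA : MeasurableSet A) (hε : 0 < ε)
    (hKA : ∀ x ∈ K, ∀ y ∈ A, ε ≤ dist x y) (hu : Measurable u) (hφ : Measurable φ)
    (hup : ∫⁻ x in K, ENNReal.ofReal (|u x| ^ p) < ⊤)
    (hφp : ∫⁻ x, ENNReal.ofReal (|φ x| ^ p) < ⊤)
    (tail : ∫⁻ x, ENNReal.ofReal (|u x| ^ (p - 1) / (1 + ‖x‖) ^ ((n : ℝ) + s * p)) < ⊤) :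
    ∫⁻ z in K ×ˢ A, ENNReal.ofReal ((|u z.1| ^ (p - 1) + |u z.2| ^ (p - 1)) * |φ z.1|)
      ∂fractionalMeasure n s p < ⊤ := by
  obtain ⟨N, N_nonneg, hN⟩ := exists_forall_dist_rpow_inv_le hK.isBounded hε
    (α := (n : ℝ) + s * p) (by positivity)
  rw [setLIntegral_prod_gagliardoMeasure hK.measurableSet hA (by fun_prop)]
  refine lt_of_le_of_lt ?_ (ENNReal.mul_lt_top (ENNReal.ofReal_lt_top (r := N))
    (lintegral_rpow_add_rpow_mul_lt_top hp hK.measure_lt_top hu hφ hup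
      ((setLIntegral_le_lintegral _ _).trans_lt hφp) hsp tail))
  rw [← lintegral_const_mul' _ _ ENNReal.ofReal_ne_top]
  refine setLIntegral_mono' hK.measurableSet fun x hx ↦ ?_
  rw [← lintegral_const_mul' _ _ ENNReal.ofReal_ne_top]
  refine (setLIntegral_mono' hA fun y hy ↦ ?_).trans (setLIntegral_le_lintegral _ _)
  rw [← ENNReal.ofReal_mul (by positivity), ← ENNReal.ofReal_mul N_nonneg, ← mul_assoc N]
  exact ENNReal.ofReal_le_ofReal
    (mul_le_mul_of_nonneg_right (hN x hx y (hKA x hx y hy)) (by positivity))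

lemma abs_sub_rpow_mul_abs_sub_le (hp₁ : 1 ≤ p) (hp₂ : p ≤ 2) {x y : EuclideanSpace ℝ (Fin n)}
    (hy : φ y = 0) :
    |u x - u y| ^ (p - 1) * |φ x - φ y| ≤ (|u x| ^ (p - 1) + |u y| ^ (p - 1)) * |φ x| := by
  rw [hy, sub_zero]
  gcongr
  exact (Real.rpow_le_rpow (abs_nonneg _) (abs_sub _ _) (by linarith)).trans
    (Real.rpow_add_le_add_rpow (abs_nonneg _) (abs_nonneg _) (by linarith) (by linarith))

namespace IsLocalWeakSolution

lemma integrable_flux (h : IsLocalWeakSolution n p s D f u) (hp₁ : 1 < p) (hp₂ : p ≤ 2)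
    (hs : 0 < s) (hD : IsOpen D) (hK : IsCompact K) (hKD : K ⊆ D) (hφ : Measurable φ)
    (φ_eq_zero : ∀ x ∉ K, φ x = 0) (hφp : ∫⁻ x, ENNReal.ofReal (|φ x| ^ p) < ⊤)
    (hφg : gagliardoE n s p univ φ < ⊤) :
    Integrable (fun z ↦ sgnPow (p - 1) (u z.1 - u z.2) * (φ z.1 - φ z.2))
      (fractionalMeasure n s p) := by
  obtain ⟨hu, local_finite, tail, -⟩ := h
  obtain ⟨ε, ε_pos, hεD⟩ := hK.exists_cthickening_subset_open hD hKD
  have hK' : IsCompact (cthickening ε K) := hK.cthickening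
  refine ⟨(by fun_prop), ?_⟩
  simp only [hasFiniteIntegral_iff_norm, norm_mul, Real.norm_eq_abs,
    abs_sgnPow (sub_ne_zero.2 hp₁.ne')]
  refine (lintegral_gagliardoMeasure_le_of_comp_swap hK.measurableSet hK'.measurableSet
    (self_subset_cthickening K) (by fun_prop) (fun z ↦ ?_) (fun z h₁ h₂ ↦ ?_)).trans_lt
    (ENNReal.add_lt_top.2 ⟨?_, ENNReal.mul_lt_top (by simp) ?_⟩)
  · rw [Prod.fst_swap, Prod.snd_swap, abs_sub_comm, abs_sub_comm (φ z.2)]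
  · simp [φ_eq_zero _ h₁, φ_eq_zero _ h₂]
  · refine lintegral_abs_rpow_sub_one_mul_abs_lt_top hp₁.le (by fun_prop) ?_ ?_
    · rw [← gagliardoE_eq hK'.measurableSet hu]
      exact (local_finite _ hεD hK').2
    · rw [← gagliardoE_eq hK'.measurableSet hφ]
      exact (gagliardoE_mono (subset_univ _)).trans_lt hφg
  · refine lt_of_le_of_lt (setLIntegral_mono' (hK.measurableSet.prod hK'.measurableSet.compl)
      fun z hz ↦ ENNReal.ofReal_le_ofReal (abs_sub_rpow_mul_abs_sub_le hp₁.le hp₂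
        (φ_eq_zero _ fun hzK ↦ hz.2 (self_subset_cthickening K hzK))))
      (lintegral_prod_far_lt_top hp₁.le (by positivity) hK hK'.measurableSet.compl ε_pos
        (fun x hx y hy ↦ ?_) hu hφ (local_finite K hKD hK).1 hφp tail)
    by_contra! hxy
    exact hy (mem_cthickening_of_dist_le y x ε K hx (by rw [dist_comm]; exact hxy.le))

lemma integral_flux (h : IsLocalWeakSolution n p s D f u) (hp₁ : 1 < p) (hp₂ : p ≤ 2)
    (hs : 0 < s) (hD : IsOpen D) (hK : IsCompact K) (hKD : K ⊆ D) (hφ : Measurable φ)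
    (φ_eq_zero : ∀ x ∉ K, φ x = 0) (hφp : ∫⁻ x, ENNReal.ofReal (|φ x| ^ p) < ⊤)
    (hφg : gagliardoE n s p univ φ < ⊤) :
    ∫ z, sgnPow (p - 1) (u z.1 - u z.2) * (φ z.1 - φ z.2) ∂fractionalMeasure n s p =
      ∫ x in D, f x * φ x := by
  have integrable := h.integrable_flux hp₁ hp₂ hs hD hK hKD hφ φ_eq_zero hφp hφg
  rw [← h.2.2.2 φ hφ ⟨K, hK, hKD, .of_forall φ_eq_zero⟩ hφp hφg]
  have measurable_kernel := measurable_ofReal_dist_rpow_inv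
    (X := EuclideanSpace ℝ (Fin n)) (α := n + s * p)
  have kernel_lt_top : ∀ᵐ z : EuclideanSpace ℝ (Fin n) × EuclideanSpace ℝ (Fin n)
      ∂volume.prod volume, ENNReal.ofReal (dist z.1 z.2 ^ (n + s * p))⁻¹ < ⊤ :=
    .of_forall fun _ ↦ ENNReal.ofReal_lt_top
  rw [fractionalMeasure, gagliardoMeasure,
    integrable_withDensity_iff_integrable_smul' measurable_kernel kernel_lt_top] at integrable
  rw [fractionalMeasure, gagliardoMeasure,
    integral_withDensity_eq_integral_toReal_smul measurable_kernel kernel_lt_top,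
    integral_prod _ integrable]
  refine integral_congr_ae (.of_forall fun x ↦ integral_congr_ae (.of_forall fun y ↦ ?_))
  dsimp only
  rw [ENNReal.toReal_ofReal (by positivity), smul_eq_mul, div_eq_inv_mul, sgnPow,
    show p - 1 - 1 = p - 2 by ring]

end IsLocalWeakSolution

end LocalWeakSolution

section FluxPairing

/-- The integrand that arises when the difference of the weak formulations for `u` and `v` is tested
with `φ`. -/
def fluxPairing {X : Type*} (p : ℝ) (u v φ : X → ℝ) (z : X × X) : ℝ :=
  (sgnPow (p - 1) (u z.1 - u z.2) - sgnPow (p - 1) (v z.1 - v z.2)) * (φ z.1 - φ z.2)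

variable {X : Type*} {p : ℝ} {u v φ η : X → ℝ} {z : X × X}

@[fun_prop]
lemma measurable_fluxPairing [MeasurableSpace X] (hu : Measurable u) (hv : Measurable v)
    (hφ : Measurable φ) : Measurable (fluxPairing p u v φ) := by
  unfold fluxPairing
  fun_prop

lemma fluxPairing_sub_nonneg (hp₁ : 1 < p) (hp₂ : p ≤ 2) (u v : X → ℝ) (z : X × X) :
    0 ≤ fluxPairing p u v (fun x ↦ u x - v x) z := by
  unfold fluxPairing
  rw [sub_sub_sub_comm]
  exact sgnPow_sub_mul_sub_nonneg (by linarith) (by linarith) _ _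

lemma fluxPairing_sub_mul_of_snd (h : v z.2 = u z.2) :
    fluxPairing p u v (fun x ↦ (u x - v x) * η x) z =
      η z.1 * fluxPairing p u v (fun x ↦ u x - v x) z := by
  simp only [fluxPairing, h]
  ring

lemma fluxPairing_sub_mul_of_fst (h : v z.1 = u z.1) :
    fluxPairing p u v (fun x ↦ (u x - v x) * η x) z =
      η z.2 * fluxPairing p u v (fun x ↦ u x - v x) z := by
  simp only [fluxPairing, h]
  ring

lemma abs_fluxPairing_le (hp : 1 < p) {t : ℝ} (ht : 0 < t) (u v φ : X → ℝ) (z : X × X) :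
    |fluxPairing p u v φ z| ≤ t * (|u z.1 - u z.2| ^ p + |v z.1 - v z.2| ^ p) +
      2 * t ^ (-(p - 1)) * |φ z.1 - φ z.2| ^ p := by
  have young (a : ℝ) := rpow_sub_one_mul_le hp.le ht (abs_nonneg a) (abs_nonneg (φ z.1 - φ z.2))
  calc |fluxPairing p u v φ z|
      ≤ (|u z.1 - u z.2| ^ (p - 1) + |v z.1 - v z.2| ^ (p - 1)) * |φ z.1 - φ z.2| := by
        rw [fluxPairing, abs_mul, ← abs_sgnPow (sub_ne_zero.2 hp.ne'),
          ← abs_sgnPow (sub_ne_zero.2 hp.ne')]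
        gcongr
        exact abs_sub _ _
    _ ≤ _ := by linarith [young (u z.1 - u z.2), young (v z.1 - v z.2)]

lemma abs_sub_rpow_le_add_fluxPairing {δ : ℝ} (hp₁ : 1 < p) (hp₂ : p ≤ 2) (hδ₀ : 0 < δ)
    (hδ₁ : δ ≤ 1) (u v : X → ℝ) (z : X × X) :
    |u z.1 - v z.1 - (u z.2 - v z.2)| ^ p ≤ δ * |u z.1 - u z.2| ^ p +
      3 / (p - 1) * δ ^ (-((2 - p) / p)) * fluxPairing p u v (fun x ↦ u x - v x) z := by
  rw [fluxPairing, sub_sub_sub_comm]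
  exact abs_sub_rpow_le_add_sgnPow hp₁ hp₂ hδ₀ hδ₁ _ _

lemma mul_abs_sub_rpow_le_add_fluxPairing (hp₁ : 1 < p) (hp₂ : p ≤ 2) (hη₀ : 0 ≤ η z.1)
    (hη₁ : η z.1 ≤ 1) (h : v z.2 = u z.2) :
    η z.1 * |u z.1 - v z.1| ^ p ≤ |u z.1 - u z.2| ^ p +
      3 / (p - 1) * fluxPairing p u v (fun x ↦ (u x - v x) * η x) z := by
  have coercivity := abs_sub_rpow_le_add_fluxPairing hp₁ hp₂ one_pos le_rfl u v z
  rw [h, sub_self, sub_zero, one_mul, Real.one_rpow, mul_one] at coercivity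
  calc η z.1 * |u z.1 - v z.1| ^ p
      ≤ η z.1 * (|u z.1 - u z.2| ^ p +
          3 / (p - 1) * fluxPairing p u v (fun x ↦ u x - v x) z) := by gcongr
    _ = η z.1 * |u z.1 - u z.2| ^ p +
          3 / (p - 1) * fluxPairing p u v (fun x ↦ (u x - v x) * η x) z := by
        rw [fluxPairing_sub_mul_of_snd h]
        ring
    _ ≤ _ := by
        gcongr
        exact mul_le_of_le_one_left (by positivity) hη₁

end FluxPairing

section WeakSolutionPair

variable {n : ℕ} {s p : ℝ} {D K : Set (EuclideanSpace ℝ (Fin n))}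
  {f g u v φ : EuclideanSpace ℝ (Fin n) → ℝ}

namespace IsLocalWeakSolution

lemma integrable_fluxPairing (hu : IsLocalWeakSolution n p s D f u)
    (hv : IsLocalWeakSolution n p s D g v) (hp₁ : 1 < p) (hp₂ : p ≤ 2) (hs : 0 < s) (hD : IsOpen D)
    (hK : IsCompact K) (hKD : K ⊆ D) (hφ : Measurable φ) (φ_eq_zero : ∀ x ∉ K, φ x = 0)
    (hφp : ∫⁻ x, ENNReal.ofReal (|φ x| ^ p) < ⊤) (hφg : gagliardoE n s p univ φ < ⊤) :
    Integrable (fluxPairing p u v φ) (fractionalMeasure n s p) := by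
  have := (hu.integrable_flux hp₁ hp₂ hs hD hK hKD hφ φ_eq_zero hφp hφg).sub
    (hv.integrable_flux hp₁ hp₂ hs hD hK hKD hφ φ_eq_zero hφp hφg)
  exact this.congr (.of_forall fun z ↦ (sub_mul _ _ _).symm)

lemma integral_fluxPairing (hu : IsLocalWeakSolution n p s D f u)
    (hv : IsLocalWeakSolution n p s D g v) (hp₁ : 1 < p) (hp₂ : p ≤ 2) (hs : 0 < s) (hD : IsOpen D)
    (hK : IsCompact K) (hKD : K ⊆ D) (hφ : Measurable φ) (φ_eq_zero : ∀ x ∉ K, φ x = 0)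
    (hφp : ∫⁻ x, ENNReal.ofReal (|φ x| ^ p) < ⊤) (hφg : gagliardoE n s p univ φ < ⊤) :
    ∫ z, fluxPairing p u v φ z ∂fractionalMeasure n s p =
      (∫ x in D, f x * φ x) - ∫ x in D, g x * φ x := by
  rw [← hu.integral_flux hp₁ hp₂ hs hD hK hKD hφ φ_eq_zero hφp hφg,
    ← hv.integral_flux hp₁ hp₂ hs hD hK hKD hφ φ_eq_zero hφp hφg,
    ← integral_sub (hu.integrable_flux hp₁ hp₂ hs hD hK hKD hφ φ_eq_zero hφp hφg)
      (hv.integrable_flux hp₁ hp₂ hs hD hK hKD hφ φ_eq_zero hφp hφg)]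
  simp only [fluxPairing, sub_mul]

end IsLocalWeakSolution

end WeakSolutionPair

section SignedIntegrals

variable {X : Type*} [MeasurableSpace X] {μ : Measure X} {a : ℝ≥0∞}

lemma setLIntegral_compl_ofReal_le {H : X → ℝ} {S : Set X} (hH : Integrable H μ) (ha : a ≠ ⊤)
    (integral_le : ∫ z, H z ∂μ ≤ a.toReal) (hS : MeasurableSet S) (H_nonneg : ∀ z ∉ S, 0 ≤ H z) :
    ∫⁻ z in Sᶜ, ENNReal.ofReal (H z) ∂μ ≤ a + ∫⁻ z in S, ENNReal.ofReal |H z| ∂μ := by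
  rw [← ofReal_integral_eq_lintegral_ofReal hH.restrict
      ((ae_restrict_iff' hS.compl).2 (.of_forall H_nonneg)),
    ← ofReal_integral_eq_lintegral_ofReal hH.abs.restrict (.of_forall fun z ↦ abs_nonneg _),
    ← ENNReal.ofReal_toReal ha, ← ENNReal.ofReal_add ENNReal.toReal_nonneg (by positivity)]
  refine ENNReal.ofReal_le_ofReal ?_
  linarith [integral_add_compl hS hH, neg_abs_le (∫ z in S, H z ∂μ),
    abs_integral_le_integral_abs (f := H) (μ := μ.restrict S)]

lemma lintegral_le_of_tendsto {F : ℕ → X → ℝ≥0∞} {G : X → ℝ≥0∞} (hF : ∀ k, AEMeasurable (F k) μ)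
    (F_le : ∀ k, ∫⁻ x, F k x ∂μ ≤ a) (hG : ∀ᵐ x ∂μ, Tendsto (fun k ↦ F k x) atTop (𝓝 (G x))) :
    ∫⁻ x, G x ∂μ ≤ a :=
  calc ∫⁻ x, G x ∂μ = ∫⁻ x, liminf (fun k ↦ F k x) atTop ∂μ :=
        lintegral_congr_ae (hG.mono fun _ hx ↦ hx.liminf_eq.symm)
    _ ≤ liminf (fun k ↦ ∫⁻ x, F k x ∂μ) atTop := lintegral_liminf_le' hF
    _ ≤ a := liminf_le_of_frequently_le' (.of_forall F_le)

lemma lintegral_ofReal_le_of_tendsto {H : ℕ → X → ℝ} {G g : X → ℝ} (hH : ∀ k, Integrable (H k) μ)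
    (ha : a ≠ ⊤) (integral_le : ∀ k, ∫ z, H k z ∂μ ≤ a.toReal) (hg : Integrable g μ)
    (g_nonneg : ∀ z, 0 ≤ g z) (neg_le : ∀ k z, -g z ≤ H k z) (G_nonneg : ∀ z, 0 ≤ G z)
    (tendsto : ∀ z, Tendsto (fun k ↦ H k z) atTop (𝓝 (G z))) :
    ∫⁻ z, ENNReal.ofReal (G z) ∂μ ≤ a := by
  have integrable_add (k : ℕ) : Integrable (fun z ↦ H k z + g z) μ := (hH k).add hg
  have shifted_le : ∫⁻ z, ENNReal.ofReal (G z + g z) ∂μ ≤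
      ENNReal.ofReal (a.toReal + ∫ z, g z ∂μ) := by
    refine lintegral_le_of_tendsto (F := fun k z ↦ ENNReal.ofReal (H k z + g z))
      (fun k ↦ (integrable_add k).1.aemeasurable.ennreal_ofReal)
      (fun k ↦ ?_) (.of_forall fun z ↦ ENNReal.tendsto_ofReal ((tendsto z).add_const _))
    rw [← ofReal_integral_eq_lintegral_ofReal (integrable_add k)
      (.of_forall fun z ↦ neg_le_iff_add_nonneg.1 (neg_le k z)), integral_add (hH k) hg]
    gcongr
    exact integral_le k
  simp_rw [ENNReal.ofReal_add (G_nonneg _) (g_nonneg _)] at shifted_le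
  rw [lintegral_add_right' _ hg.1.aemeasurable.ennreal_ofReal,
    ENNReal.ofReal_add ENNReal.toReal_nonneg (integral_nonneg g_nonneg),
    ofReal_integral_eq_lintegral_ofReal hg (.of_forall g_nonneg), ENNReal.ofReal_toReal ha]
    at shifted_le
  refine (ENNReal.add_le_add_iff_right ?_).1 shifted_le
  exact ((hasFiniteIntegral_iff_ofReal (.of_forall g_nonneg)).1 hg.2).ne

end SignedIntegrals

section CutoffEnergy

variable {n : ℕ} {s p : ℝ} {x₀ : EuclideanSpace ℝ (Fin n)} {R ε σ : ℝ}
  {w h : EuclideanSpace ℝ (Fin n) → ℝ}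

lemma lintegral_mul_relDist_rpow (hh : Measurable h) (h_eq_zero : ∀ x ∉ ball x₀ R, h x = 0) :
    ∫⁻ z, ENNReal.ofReal (h z.1 * relDist x₀ R z.1 z.2 ^ p) ∂fractionalMeasure n s p =
      hardyIntegral volume (s * p) x₀ R (fun x ↦ ENNReal.ofReal (h x)) *
        truncatedKernelIntegral (volume : Measure (EuclideanSpace ℝ (Fin n))) p (s * p) := by
  have hB : MeasurableSet (ball x₀ R ×ˢ (univ : Set (EuclideanSpace ℝ (Fin n)))) :=
    measurableSet_ball.prod .univ
  rw [← setLIntegral_mul_relDist_rpow volume p (s * p) x₀ R (by fun_prop), finrank_euclideanSpace,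
    Fintype.card_fin, ← setLIntegral_eq_of_support_subset (s := ball x₀ R ×ˢ univ)]
  · refine setLIntegral_congr_fun hB fun z hz ↦ ENNReal.ofReal_mul' ?_
    have := relDist_nonneg (y := z.2) hz.1
    positivity
  · intro z hz
    refine ⟨?_, mem_univ _⟩
    by_contra hz'
    simp [h_eq_zero _ hz'] at hz

lemma lintegral_mul_relDist_rpow_swap (hh : Measurable h)
    (h_eq_zero : ∀ x ∉ ball x₀ R, h x = 0) :
    ∫⁻ z, ENNReal.ofReal (h z.2 * relDist x₀ R z.2 z.1 ^ p) ∂fractionalMeasure n s p =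
      hardyIntegral volume (s * p) x₀ R (fun x ↦ ENNReal.ofReal (h x)) *
        truncatedKernelIntegral (volume : Measure (EuclideanSpace ℝ (Fin n))) p (s * p) := by
  rw [← lintegral_mul_relDist_rpow hh h_eq_zero]
  exact lintegral_comp_swap_gagliardoMeasure
    (fun z ↦ ENNReal.ofReal (h z.1 * relDist x₀ R z.1 z.2 ^ p))

/-- The constant of `lintegral_cutoffMajorant_le`, bounding the fractional energy of a cutoff
product. -/
def cutoffEnergyConst (n : ℕ) (s p : ℝ) : ℝ≥0∞ :=
  ENNReal.ofReal (2 ^ (p - 1)) * (1 + ENNReal.ofReal ((p / (p - 1)) ^ p) *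
    (2 * truncatedKernelIntegral (volume : Measure (EuclideanSpace ℝ (Fin n))) p (s * p)))

lemma cutoffEnergyConst_lt_top [NeZero n] (hp : 0 < p) (hs₁ : 0 < s) (hs₂ : s < 1) :
    cutoffEnergyConst n s p < ⊤ := by
  have := truncatedKernelIntegral_lt_top (volume : Measure (EuclideanSpace ℝ (Fin n)))
    (mul_pos hs₁ hp) (mul_lt_of_lt_one_left hp hs₂)
  unfold cutoffEnergyConst
  finiteness

lemma lintegral_cutoffMajorant_le (hp : 1 < p) (hw : Measurable w) (hh : Measurable h)
    (h_eq_zero : ∀ x ∉ ball x₀ R, h x = 0) :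
    ∫⁻ z, ENNReal.ofReal (cutoffMajorant p x₀ R w h z) ∂fractionalMeasure n s p ≤
      cutoffEnergyConst n s p * (gagliardoE n s p (ball x₀ R) w +
        hardyIntegral volume (s * p) x₀ R (fun x ↦ ENNReal.ofReal (h x))) := by
  have hB : MeasurableSet (ball x₀ R ×ˢ ball x₀ R) := measurableSet_ball.prod measurableSet_ball
  have : 0 < p - 1 := by linarith
  have : Measurable ((ball x₀ R ×ˢ ball x₀ R).indicator fun z ↦ |w z.1 - w z.2| ^ p) :=
    Measurable.indicator (by fun_prop) hB
  calc ∫⁻ z, ENNReal.ofReal (cutoffMajorant p x₀ R w h z) ∂fractionalMeasure n s p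
      ≤ ∫⁻ z, ENNReal.ofReal (2 ^ (p - 1)) * (ENNReal.ofReal
          ((ball x₀ R ×ˢ ball x₀ R).indicator (fun z ↦ |w z.1 - w z.2| ^ p) z) +
          ENNReal.ofReal ((p / (p - 1)) ^ p) * (ENNReal.ofReal (h z.1 * relDist x₀ R z.1 z.2 ^ p) +
            ENNReal.ofReal (h z.2 * relDist x₀ R z.2 z.1 ^ p))) ∂fractionalMeasure n s p := by
        refine lintegral_mono fun z ↦ ?_
        rw [cutoffMajorant, ENNReal.ofReal_mul (by positivity)]
        gcongr
        refine ENNReal.ofReal_add_le.trans ?_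
        rw [ENNReal.ofReal_mul (by positivity)]
        gcongr
        exact ENNReal.ofReal_add_le
    _ = ENNReal.ofReal (2 ^ (p - 1)) * (gagliardoE n s p (ball x₀ R) w +
          ENNReal.ofReal ((p / (p - 1)) ^ p) *
            (2 * truncatedKernelIntegral (volume : Measure (EuclideanSpace ℝ (Fin n))) p (s * p)) *
              hardyIntegral volume (s * p) x₀ R (fun x ↦ ENNReal.ofReal (h x))) := by
        rw [lintegral_const_mul _ (by fun_prop), lintegral_add_left (by fun_prop),
          lintegral_const_mul _ (by fun_prop), lintegral_add_left (by fun_prop),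
          lintegral_mul_relDist_rpow hh h_eq_zero, lintegral_mul_relDist_rpow_swap hh h_eq_zero,
          gagliardoE_eq_lintegral_indicator measurableSet_ball hw]
        ring
    _ ≤ _ := by
        rw [cutoffEnergyConst, mul_assoc (ENNReal.ofReal (2 ^ (p - 1))) (1 + _)]
        gcongr ENNReal.ofReal (2 ^ (p - 1)) * ?_
        rw [add_mul, one_mul, mul_add]
        gcongr
        · exact le_self_add
        · exact le_add_self

lemma gagliardoE_mul_cutoff_le (hp : 1 < p) (hε : 0 < ε) (hw : Measurable w) :
    gagliardoE n s p univ (fun x ↦ w x * cutoff p x₀ R ε x) ≤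
      cutoffEnergyConst n s p * (gagliardoE n s p (ball x₀ R) w +
        hardyIntegral volume (s * p) x₀ R
          (fun x ↦ ENNReal.ofReal (cutoff p x₀ R ε x * |w x| ^ p))) := by
  have hη := measurable_cutoff (p := p) (x₀ := x₀) (R := R) (ε := ε)
  rw [gagliardoE_univ (by fun_prop)]
  refine le_trans (lintegral_mono fun z ↦ ENNReal.ofReal_le_ofReal ?_)
    (lintegral_cutoffMajorant_le (h := fun x ↦ cutoff p x₀ R ε x * |w x| ^ p) hp hw (by fun_prop)
      fun x hx ↦ by rw [cutoff_eq_zero_of_notMem_ball hp hε hx, zero_mul])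
  exact abs_mul_cutoff_sub_rpow_le hp hε w z.1 z.2

lemma hardyIntegral_cutoff_lt_top (hp : 1 < p) (hσ : 0 ≤ σ) (hε : 0 < ε)
    (hwp : ∫⁻ x in ball x₀ R, ENNReal.ofReal (|w x| ^ p) < ⊤) :
    hardyIntegral volume σ x₀ R (fun x ↦ ENNReal.ofReal (cutoff p x₀ R ε x * |w x| ^ p)) < ⊤ := by
  calc hardyIntegral volume σ x₀ R (fun x ↦ ENNReal.ofReal (cutoff p x₀ R ε x * |w x| ^ p))
      ≤ ∫⁻ x in ball x₀ R, ENNReal.ofReal (|w x| ^ p) * ENNReal.ofReal (ε ^ (-σ)) := by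
        refine lintegral_mono fun x ↦ ?_
        by_cases hx : x ∈ closedBall x₀ (R - ε)
        · have := cutoff_le_one (x₀ := x₀) (R := R) hp hε x
          gcongr ENNReal.ofReal ?_ * ENNReal.ofReal ?_
          · exact mul_le_of_le_one_left (by positivity) this
          · exact Real.rpow_le_rpow_of_nonpos hε (by linarith [mem_closedBall.1 hx]) (by linarith)
        · simp [cutoff_eq_zero_of_notMem_closedBall hp hε hx]
    _ = (∫⁻ x in ball x₀ R, ENNReal.ofReal (|w x| ^ p)) * ENNReal.ofReal (ε ^ (-σ)) :=
        lintegral_mul_const' _ _ ENNReal.ofReal_ne_top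
    _ < ⊤ := ENNReal.mul_lt_top hwp ENNReal.ofReal_lt_top

end CutoffEnergy

section FluxEnergy

variable {n : ℕ} {s p : ℝ} {D : Set (EuclideanSpace ℝ (Fin n))}
  {u v φ : EuclideanSpace ℝ (Fin n) → ℝ}

lemma integrableOn_abs_sub_rpow (hD : MeasurableSet D) (hu : Measurable u)
    (hE : gagliardoE n s p D u < ⊤) :
    IntegrableOn (fun z ↦ |u z.1 - u z.2| ^ p) (D ×ˢ D) (fractionalMeasure n s p) := by
  rw [gagliardoE_eq hD hu] at hE
  exact ⟨Measurable.aestronglyMeasurable (by fun_prop),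
    (hasFiniteIntegral_iff_ofReal (.of_forall fun z ↦ by positivity)).2 hE⟩

lemma setLIntegral_abs_fluxPairing_le (hp : 1 < p) (hD : MeasurableSet D) (hu : Measurable u)
    (hv : Measurable v) (hφ : Measurable φ) {t : ℝ} (ht : 0 < t) :
    ∫⁻ z in D ×ˢ D, ENNReal.ofReal |fluxPairing p u v φ z| ∂fractionalMeasure n s p ≤
      ENNReal.ofReal t * (gagliardoE n s p D u + gagliardoE n s p D v) +
        ENNReal.ofReal (2 * t ^ (-(p - 1))) * gagliardoE n s p D φ := by
  calc ∫⁻ z in D ×ˢ D, ENNReal.ofReal |fluxPairing p u v φ z| ∂fractionalMeasure n s p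
      ≤ ∫⁻ z in D ×ˢ D, (ENNReal.ofReal t *
          (ENNReal.ofReal (|u z.1 - u z.2| ^ p) + ENNReal.ofReal (|v z.1 - v z.2| ^ p)) +
          ENNReal.ofReal (2 * t ^ (-(p - 1))) * ENNReal.ofReal (|φ z.1 - φ z.2| ^ p))
          ∂fractionalMeasure n s p := by
        refine lintegral_mono fun z ↦ ?_
        refine (ENNReal.ofReal_le_ofReal (abs_fluxPairing_le hp ht u v φ z)).trans_eq ?_
        rw [ENNReal.ofReal_add (by positivity) (by positivity), ENNReal.ofReal_mul ht.le,
          ENNReal.ofReal_add (by positivity) (by positivity), ENNReal.ofReal_mul (by positivity)]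
    _ = _ := by
        rw [lintegral_add_left (by fun_prop), lintegral_const_mul _ (by fun_prop),
          lintegral_const_mul _ (by fun_prop), lintegral_add_left (by fun_prop),
          gagliardoE_eq hD hu, gagliardoE_eq hD hv, gagliardoE_eq hD hφ]

lemma gagliardoE_sub_le_add_lintegral_fluxPairing (hp₁ : 1 < p) (hp₂ : p ≤ 2)
    (hD : MeasurableSet D) (hu : Measurable u) (hv : Measurable v) {δ : ℝ} (hδ₀ : 0 < δ)
    (hδ₁ : δ ≤ 1) :
    gagliardoE n s p D (fun x ↦ u x - v x) ≤ ENNReal.ofReal δ * gagliardoE n s p D u +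
      ENNReal.ofReal (3 / (p - 1) * δ ^ (-((2 - p) / p))) *
        ∫⁻ z, ENNReal.ofReal (fluxPairing p u v (fun x ↦ u x - v x) z)
          ∂fractionalMeasure n s p := by
  have : 0 < p - 1 := by linarith
  rw [gagliardoE_eq (u := fun x ↦ u x - v x) hD (hu.sub hv), gagliardoE_eq hD hu]
  calc ∫⁻ z in D ×ˢ D, ENNReal.ofReal (|u z.1 - v z.1 - (u z.2 - v z.2)| ^ p)
        ∂fractionalMeasure n s p
      ≤ ∫⁻ z in D ×ˢ D, (ENNReal.ofReal δ * ENNReal.ofReal (|u z.1 - u z.2| ^ p) +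
          ENNReal.ofReal (3 / (p - 1) * δ ^ (-((2 - p) / p))) *
            ENNReal.ofReal (fluxPairing p u v (fun x ↦ u x - v x) z))
          ∂fractionalMeasure n s p := by
        refine lintegral_mono fun z ↦ ?_
        dsimp only
        rw [← ENNReal.ofReal_mul hδ₀.le, ← ENNReal.ofReal_mul (by positivity)]
        exact (ENNReal.ofReal_le_ofReal
          (abs_sub_rpow_le_add_fluxPairing hp₁ hp₂ hδ₀ hδ₁ u v z)).trans ENNReal.ofReal_add_le
    _ ≤ _ := by
        rw [lintegral_add_left (by fun_prop), lintegral_const_mul _ (by fun_prop),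
          lintegral_const_mul _ (by fun_prop)]
        gcongr
        exact Measure.restrict_le_self

end FluxEnergy

section Absorption

lemma le_two_mul_of_le_add_half {a b : ℝ≥0∞} (ha : a ≠ ⊤) (h : a ≤ b + a / 2) : a ≤ 2 * b := by
  have half_le : a / 2 ≤ b := by
    rw [← ENNReal.add_le_add_iff_right (ENNReal.div_ne_top ha two_ne_zero), ENNReal.add_halves]
    exact h
  rwa [mul_comm, ← ENNReal.div_le_iff two_ne_zero ENNReal.ofNat_ne_top]

lemma le_two_mul_of_young {p L Q : ℝ} (hp : 1 < p) (hL : 0 < L) (hQ : 0 < Q) {W A F : ℝ≥0∞}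
    (hW : W ≠ ⊤) (h : ∀ t : ℝ, 0 < t → W ≤ A + ENNReal.ofReal L *
      (ENNReal.ofReal t * F + ENNReal.ofReal (t ^ (-(p - 1))) * (ENNReal.ofReal Q * W))) :
    W ≤ 2 * (A + ENNReal.ofReal (L * (2 * L * Q) ^ (1 / (p - 1))) * F) := by
  have : 0 < p - 1 := by linarith
  set t := (2 * L * Q) ^ (1 / (p - 1)) with ht
  have absorption_factor : L * t ^ (-(p - 1)) * Q = 2⁻¹ := by
    rw [ht, ← Real.rpow_mul (by positivity), show 1 / (p - 1) * -(p - 1) = -1 by field_simp,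
      Real.rpow_neg_one]
    field_simp
  refine le_two_mul_of_le_add_half hW ((h t (by positivity)).trans_eq ?_)
  rw [div_eq_mul_inv, ← ENNReal.ofReal_ofNat 2, ← ENNReal.ofReal_inv_of_pos two_pos,
    ← absorption_factor, ENNReal.ofReal_mul (q := Q) (by positivity), ENNReal.ofReal_mul hL.le,
    ENNReal.ofReal_mul hL.le]
  ring

lemma exists_ofReal_mul_rpow_neg_mul_le {γ : ℝ} (hγ : 0 < γ) (c : ℝ) {a b : ℝ≥0∞} (ha : a ≠ ⊤)
    (hb : 0 < b) : ∃ t : ℝ, 0 < t ∧ ENNReal.ofReal (c * t ^ (-γ)) * a ≤ b := by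
  have tendsto_zero :
      Tendsto (fun t : ℝ ↦ ENNReal.ofReal (c * t ^ (-γ)) * a) atTop (𝓝 0) := by
    simpa using ENNReal.Tendsto.mul_const
      (ENNReal.tendsto_ofReal ((tendsto_rpow_neg_atTop hγ).const_mul c)) (.inr ha)
  exact ((eventually_gt_atTop 0).and (tendsto_zero.eventually_le_const hb)).exists

end Absorption

section ComparisonConst

/-- The constant of the comparison estimate, in terms of the constant of the fractional Poincaré
inequality `IsComparisonPair.lintegral_sub_le`. -/
def comparisonConst (n : ℕ) (s p : ℝ) : ℝ :=
  2 * (3 / (p - 1)) ^ (p / (p - 1)) * (1 / 2) ^ (-((2 - p) / (p - 1))) *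
    (2 / (exteriorKernelConst (volume : Measure (EuclideanSpace ℝ (Fin n))) (s * p)).toReal) ^
      (1 / (p - 1))

variable {n : ℕ} {s p : ℝ}

lemma exteriorKernelConst_toReal_pos :
    0 < (exteriorKernelConst (volume : Measure (EuclideanSpace ℝ (Fin n))) (s * p)).toReal :=
  ENNReal.toReal_pos (exteriorKernelConst_pos _).ne' (exteriorKernelConst_lt_top _).ne

lemma comparisonConst_pos (hp : 1 < p) : 0 < comparisonConst n s p := by
  have : 0 < p - 1 := by linarith
  have := exteriorKernelConst_toReal_pos (n := n) (s := s) (p := p)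
  unfold comparisonConst
  positivity

lemma two_mul_mul_rpow_eq_comparisonConst_mul {L δ R : ℝ} (hp : 1 < p) (hδ : 0 < δ) (hR : 0 < R)
    (hL : L = 3 / (p - 1) * (δ / 2) ^ (-((2 - p) / p))) :
    2 * (L * (2 * L * (R ^ (s * p) / (exteriorKernelConst
        (volume : Measure (EuclideanSpace ℝ (Fin n))) (s * p)).toReal)) ^ (1 / (p - 1))) =
      comparisonConst n s p * δ ^ (-((2 - p) / (p - 1))) * R ^ (s * (p / (p - 1))) := by
  have : 0 < p - 1 := by linarith
  have : 0 < L := hL ▸ by positivity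
  have := exteriorKernelConst_toReal_pos (n := n) (s := s) (p := p)
  have rpow_L : L * L ^ (1 / (p - 1)) = (3 / (p - 1)) ^ (p / (p - 1)) *
      ((1 / 2) ^ (-((2 - p) / (p - 1))) * δ ^ (-((2 - p) / (p - 1)))) := by
    calc L * L ^ (1 / (p - 1)) = L ^ (p / (p - 1)) := by
          rw [← Real.rpow_one_add' (by positivity) (by positivity)]
          congr 1
          field_simp
          ring
      _ = _ := by
          rw [hL, Real.mul_rpow (by positivity) (by positivity), ← Real.rpow_mul (by positivity),
            ← Real.mul_rpow (by positivity) hδ.le]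
          congr 2
          · ring
          · field_simp
  rw [comparisonConst]
  set κ := (exteriorKernelConst (volume : Measure (EuclideanSpace ℝ (Fin n))) (s * p)).toReal
  calc 2 * (L * (2 * L * (R ^ (s * p) / κ)) ^ (1 / (p - 1)))
      = 2 * (L * ((2 / κ) * L * R ^ (s * p)) ^ (1 / (p - 1))) := by
        congr 3
        ring
    _ = 2 * (2 / κ) ^ (1 / (p - 1)) * R ^ (s * (p / (p - 1))) * (L * L ^ (1 / (p - 1))) := by
        rw [Real.mul_rpow (by positivity) (by positivity), Real.mul_rpow (by positivity)
          (by positivity), ← Real.rpow_mul hR.le, mul_assoc s p, mul_one_div]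
        ring
    _ = _ := by
        rw [rpow_L]
        ring

end ComparisonConst

/-- The data of the comparison estimate: `u` and `v` are local weak solutions in the ball `B_R(x₀)`
with right-hand sides `f` and `0`, of finite energy there (`u` even in the concentric ball of twice
the radius), and `v = u` outside the ball. The last identity is required at every point; modifying
`v` on a null set achieves this. -/
structure IsComparisonPair (n : ℕ) (s p : ℝ) (x₀ : EuclideanSpace ℝ (Fin n)) (R : ℝ)
    (f u v : EuclideanSpace ℝ (Fin n) → ℝ) : Prop where
  radius_pos : 0 < R
  measurable_rhs : Measurable f
  lintegral_rhs_lt_top : ∫⁻ x in ball x₀ R, ENNReal.ofReal (|f x| ^ (p / (p - 1))) < ⊤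
  left : IsLocalWeakSolution n p s (ball x₀ R) f u
  lintegral_left_lt_top : ∫⁻ x in ball x₀ R, ENNReal.ofReal (|u x| ^ p) < ⊤
  gagliardoE_left_lt_top : gagliardoE n s p (ball x₀ (2 * R)) u < ⊤
  right : IsLocalWeakSolution n p s (ball x₀ R) (fun _ ↦ 0) v
  lintegral_right_lt_top : ∫⁻ x in ball x₀ R, ENNReal.ofReal (|v x| ^ p) < ⊤
  gagliardoE_right_lt_top : gagliardoE n s p (ball x₀ R) v < ⊤
  right_eq_left : ∀ x ∉ ball x₀ R, v x = u x

namespace IsComparisonPair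

variable {n : ℕ} {s p : ℝ} {x₀ : EuclideanSpace ℝ (Fin n)} {R ε : ℝ}
  {f u v : EuclideanSpace ℝ (Fin n) → ℝ}

section TestFunction

lemma measurable_left (h : IsComparisonPair n s p x₀ R f u v) : Measurable u := h.left.1

lemma measurable_right (h : IsComparisonPair n s p x₀ R f u v) : Measurable v := h.right.1

lemma ball_subset_ball_two_mul (h : IsComparisonPair n s p x₀ R f u v) :
    ball x₀ R ⊆ ball x₀ (2 * R) := ball_subset_ball (by linarith [h.radius_pos])

lemma gagliardoE_left_ball_lt_top (h : IsComparisonPair n s p x₀ R f u v) :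
    gagliardoE n s p (ball x₀ R) u < ⊤ :=
  (gagliardoE_mono h.ball_subset_ball_two_mul).trans_lt h.gagliardoE_left_lt_top

lemma gagliardoE_sub_lt_top (h : IsComparisonPair n s p x₀ R f u v) (hp : 1 ≤ p) :
    gagliardoE n s p (ball x₀ R) (fun x ↦ u x - v x) < ⊤ :=
  _root_.gagliardoE_sub_lt_top hp measurableSet_ball h.measurable_left h.measurable_right
    h.gagliardoE_left_ball_lt_top h.gagliardoE_right_lt_top

lemma lintegral_sub_lt_top (h : IsComparisonPair n s p x₀ R f u v) (hp : 1 ≤ p) :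
    ∫⁻ x in ball x₀ R, ENNReal.ofReal (|u x - v x| ^ p) < ⊤ :=
  lintegral_abs_sub_rpow_lt_top hp h.measurable_left h.lintegral_left_lt_top
    h.lintegral_right_lt_top

lemma lintegral_rhs_mul_sub_lt_top (h : IsComparisonPair n s p x₀ R f u v) (hp : 1 < p) :
    ∫⁻ x in ball x₀ R, ENNReal.ofReal (|f x| * |u x - v x|) < ⊤ :=
  (lintegral_abs_mul_abs_le hp one_pos h.measurable_rhs).trans_lt (ENNReal.add_lt_top.2
    ⟨ENNReal.mul_lt_top ENNReal.ofReal_lt_top h.lintegral_rhs_lt_top,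
      ENNReal.mul_lt_top ENNReal.ofReal_lt_top (h.lintegral_sub_lt_top hp.le)⟩)

lemma abs_sub_mul_cutoff_le (hp : 1 < p) (hε : 0 < ε) (x : EuclideanSpace ℝ (Fin n)) :
    |(u x - v x) * cutoff p x₀ R ε x| ≤ |u x - v x| := by
  rw [abs_mul, abs_of_nonneg (cutoff_nonneg hε x)]
  exact mul_le_of_le_one_right (abs_nonneg _) (cutoff_le_one hp hε x)

lemma lintegral_sub_mul_cutoff_lt_top (h : IsComparisonPair n s p x₀ R f u v) (hp : 1 < p)
    (hε : 0 < ε) :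
    ∫⁻ x, ENNReal.ofReal (|(u x - v x) * cutoff p x₀ R ε x| ^ p) < ⊤ := by
  rw [← setLIntegral_eq_of_support_subset (s := ball x₀ R)]
  · refine lt_of_le_of_lt (lintegral_mono fun x ↦ ENNReal.ofReal_le_ofReal ?_)
      (h.lintegral_sub_lt_top hp.le)
    have := abs_sub_mul_cutoff_le (u := u) (v := v) (x₀ := x₀) (R := R) hp hε x
    gcongr
  · refine Function.support_subset_iff'.2 fun x hx ↦ ?_
    rw [h.right_eq_left x hx, sub_self, zero_mul, abs_zero, Real.zero_rpow (by linarith),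
      ENNReal.ofReal_zero]

lemma gagliardoE_sub_mul_cutoff_lt_top [NeZero n] (h : IsComparisonPair n s p x₀ R f u v)
    (hp : 1 < p) (hs₁ : 0 < s) (hs₂ : s < 1) (hε : 0 < ε) :
    gagliardoE n s p univ (fun x ↦ (u x - v x) * cutoff p x₀ R ε x) < ⊤ :=
  (gagliardoE_mul_cutoff_le hp hε (h.measurable_left.sub h.measurable_right)).trans_lt
    (ENNReal.mul_lt_top (cutoffEnergyConst_lt_top (by linarith) hs₁ hs₂) (ENNReal.add_lt_top.2
      ⟨h.gagliardoE_sub_lt_top hp.le,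
        hardyIntegral_cutoff_lt_top hp (by positivity) hε (h.lintegral_sub_lt_top hp.le)⟩))

lemma sub_mul_cutoff_eq_zero (hp : 1 < p) (hε : 0 < ε) :
    ∀ x ∉ closedBall x₀ (R - ε), (u x - v x) * cutoff p x₀ R ε x = 0 := fun x hx ↦ by
  rw [cutoff_eq_zero_of_notMem_closedBall hp hε hx, mul_zero]

lemma integrable_fluxPairing_cutoff [NeZero n] (h : IsComparisonPair n s p x₀ R f u v)
    (hp₁ : 1 < p) (hp₂ : p ≤ 2) (hs₁ : 0 < s) (hs₂ : s < 1) (hε : 0 < ε) :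
    Integrable (fluxPairing p u v (fun x ↦ (u x - v x) * cutoff p x₀ R ε x))
      (fractionalMeasure n s p) :=
  h.left.integrable_fluxPairing h.right hp₁ hp₂ hs₁ isOpen_ball (isCompact_closedBall x₀ (R - ε))
    (closedBall_subset_ball (by linarith))
    ((h.measurable_left.sub h.measurable_right).mul measurable_cutoff)
    (sub_mul_cutoff_eq_zero hp₁ hε) (h.lintegral_sub_mul_cutoff_lt_top hp₁ hε)
    (h.gagliardoE_sub_mul_cutoff_lt_top hp₁ hs₁ hs₂ hε)

lemma integral_fluxPairing_cutoff_le [NeZero n] (h : IsComparisonPair n s p x₀ R f u v)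
    (hp₁ : 1 < p) (hp₂ : p ≤ 2) (hs₁ : 0 < s) (hs₂ : s < 1) (hε : 0 < ε) :
    ∫ z, fluxPairing p u v (fun x ↦ (u x - v x) * cutoff p x₀ R ε x) z ∂fractionalMeasure n s p ≤
      (∫⁻ x in ball x₀ R, ENNReal.ofReal (|f x| * |u x - v x|)).toReal := by
  have hf := h.measurable_rhs
  have hu := h.measurable_left
  have hv := h.measurable_right
  have integrable_rhs : Integrable (fun x ↦ |f x| * |u x - v x|) (volume.restrict (ball x₀ R)) :=
    ⟨by fun_prop, (hasFiniteIntegral_iff_ofReal (.of_forall fun x ↦ by positivity)).2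
      (h.lintegral_rhs_mul_sub_lt_top hp₁)⟩
  rw [h.left.integral_fluxPairing (φ := fun x ↦ (u x - v x) * cutoff p x₀ R ε x) h.right hp₁ hp₂ hs₁
    isOpen_ball (isCompact_closedBall x₀ (R - ε)) (closedBall_subset_ball (by linarith))
    ((hu.sub hv).mul measurable_cutoff) (sub_mul_cutoff_eq_zero hp₁ hε)
    (h.lintegral_sub_mul_cutoff_lt_top hp₁ hε)
    (h.gagliardoE_sub_mul_cutoff_lt_top hp₁ hs₁ hs₂ hε)]
  simp only [zero_mul, integral_zero, sub_zero]
  rw [← integral_eq_lintegral_of_nonneg_ae (.of_forall fun x ↦ by positivity) integrable_rhs.1]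
  refine (le_abs_self _).trans (abs_integral_le_integral_abs.trans
    (integral_mono_of_nonneg (.of_forall fun x ↦ by positivity) integrable_rhs
      (.of_forall fun x ↦ ?_)))
  dsimp only
  rw [abs_mul]
  exact mul_le_mul_of_nonneg_left (abs_sub_mul_cutoff_le hp₁ hε x) (abs_nonneg _)

lemma fluxPairing_cutoff_nonneg (h : IsComparisonPair n s p x₀ R f u v) (hp₁ : 1 < p)
    (hp₂ : p ≤ 2) (hε : 0 < ε) {z : EuclideanSpace ℝ (Fin n) × EuclideanSpace ℝ (Fin n)}
    (hz : z ∉ ball x₀ R ×ˢ ball x₀ R) :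
    0 ≤ fluxPairing p u v (fun x ↦ (u x - v x) * cutoff p x₀ R ε x) z := by
  by_cases hz₁ : z.1 ∈ ball x₀ R
  · rw [fluxPairing_sub_mul_of_snd (h.right_eq_left _ fun hz₂ ↦ hz ⟨hz₁, hz₂⟩)]
    exact mul_nonneg (cutoff_nonneg hε _) (fluxPairing_sub_nonneg hp₁ hp₂ u v z)
  · rw [fluxPairing_sub_mul_of_fst (h.right_eq_left _ hz₁)]
    exact mul_nonneg (cutoff_nonneg hε _) (fluxPairing_sub_nonneg hp₁ hp₂ u v z)

end TestFunction

section HardyBound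

lemma exteriorKernelConst_mul_hardyIntegral_cutoff_le [NeZero n]
    (h : IsComparisonPair n s p x₀ R f u v) (hp₁ : 1 < p) (hp₂ : p ≤ 2) (hs : 0 < s)
    (hε : 0 < ε) :
    exteriorKernelConst (volume : Measure (EuclideanSpace ℝ (Fin n))) (s * p) *
        hardyIntegral volume (s * p) x₀ R
          (fun x ↦ ENNReal.ofReal (cutoff p x₀ R ε x * |u x - v x| ^ p)) ≤
      gagliardoE n s p (ball x₀ (2 * R)) u + ENNReal.ofReal (3 / (p - 1)) *
        ∫⁻ z in (ball x₀ R ×ˢ ball x₀ R)ᶜ,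
          ENNReal.ofReal (fluxPairing p u v (fun x ↦ (u x - v x) * cutoff p x₀ R ε x) z)
          ∂fractionalMeasure n s p := by
  have hu := h.measurable_left
  have hv := h.measurable_right
  have hη := measurable_cutoff (p := p) (x₀ := x₀) (R := R) (ε := ε)
  have : 0 < p - 1 := by linarith
  have hS : MeasurableSet (ball x₀ R ×ˢ (ball x₀ (2 * R) \ ball x₀ R)) :=
    measurableSet_ball.prod (measurableSet_ball.diff measurableSet_ball)
  refine (exteriorKernelConst_mul_hardyIntegral_le volume (by positivity) (by fun_prop)).trans ?_
  rw [finrank_euclideanSpace, Fintype.card_fin]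
  calc ∫⁻ z in ball x₀ R ×ˢ (ball x₀ (2 * R) \ ball x₀ R),
        ENNReal.ofReal (cutoff p x₀ R ε z.1 * |u z.1 - v z.1| ^ p) ∂fractionalMeasure n s p
      ≤ ∫⁻ z in ball x₀ R ×ˢ (ball x₀ (2 * R) \ ball x₀ R),
          (ENNReal.ofReal (|u z.1 - u z.2| ^ p) + ENNReal.ofReal (3 / (p - 1)) *
            ENNReal.ofReal (fluxPairing p u v (fun x ↦ (u x - v x) * cutoff p x₀ R ε x) z))
          ∂fractionalMeasure n s p := by
        refine setLIntegral_mono' hS fun z hz ↦ ?_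
        rw [← ENNReal.ofReal_mul (by positivity)]
        exact (ENNReal.ofReal_le_ofReal (mul_abs_sub_rpow_le_add_fluxPairing hp₁ hp₂
          (cutoff_nonneg hε _) (cutoff_le_one hp₁ hε _) (h.right_eq_left _ hz.2.2))).trans
          ENNReal.ofReal_add_le
    _ ≤ _ := by
        rw [lintegral_add_left (by fun_prop), lintegral_const_mul _ (by fun_prop),
          gagliardoE_eq measurableSet_ball hu]
        gcongr ?_ + _ * ?_
        · exact lintegral_mono_set (prod_mono h.ball_subset_ball_two_mul sdiff_subset)
        · exact lintegral_mono_set fun z hz hz' ↦ hz.2.2 hz'.2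

lemma setLIntegral_compl_fluxPairing_cutoff_le [NeZero n] (h : IsComparisonPair n s p x₀ R f u v)
    (hp₁ : 1 < p) (hp₂ : p ≤ 2) (hs₁ : 0 < s) (hs₂ : s < 1) (hε : 0 < ε) {t : ℝ} (ht : 0 < t) :
    ∫⁻ z in (ball x₀ R ×ˢ ball x₀ R)ᶜ,
        ENNReal.ofReal (fluxPairing p u v (fun x ↦ (u x - v x) * cutoff p x₀ R ε x) z)
        ∂fractionalMeasure n s p ≤
      (∫⁻ x in ball x₀ R, ENNReal.ofReal (|f x| * |u x - v x|)) +
        (ENNReal.ofReal t * (gagliardoE n s p (ball x₀ R) u + gagliardoE n s p (ball x₀ R) v) +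
          ENNReal.ofReal (2 * t ^ (-(p - 1))) * (cutoffEnergyConst n s p *
            (gagliardoE n s p (ball x₀ R) (fun x ↦ u x - v x) +
              hardyIntegral volume (s * p) x₀ R
                (fun x ↦ ENNReal.ofReal (cutoff p x₀ R ε x * |u x - v x| ^ p))))) := by
  have hw : Measurable fun x ↦ u x - v x := h.measurable_left.sub h.measurable_right
  refine (setLIntegral_compl_ofReal_le (h.integrable_fluxPairing_cutoff hp₁ hp₂ hs₁ hs₂ hε)
    (h.lintegral_rhs_mul_sub_lt_top hp₁).ne
    (h.integral_fluxPairing_cutoff_le hp₁ hp₂ hs₁ hs₂ hε)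
    (measurableSet_ball.prod measurableSet_ball)
    (fun z hz ↦ h.fluxPairing_cutoff_nonneg hp₁ hp₂ hε hz)).trans ?_
  gcongr
  refine (setLIntegral_abs_fluxPairing_le hp₁ measurableSet_ball h.measurable_left
    h.measurable_right (hw.mul measurable_cutoff) ht).trans ?_
  gcongr
  exact (gagliardoE_mono (subset_univ _)).trans (gagliardoE_mul_cutoff_le hp₁ hε hw)

lemma exists_forall_mul_hardyIntegral_cutoff_le_add_half [NeZero n]
    (h : IsComparisonPair n s p x₀ R f u v) (hp₁ : 1 < p) (hp₂ : p ≤ 2) (hs₁ : 0 < s)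
    (hs₂ : s < 1) {κ : ℝ≥0∞}
    (hκ : κ = exteriorKernelConst (volume : Measure (EuclideanSpace ℝ (Fin n))) (s * p)) :
    ∃ N < ⊤, ∀ ε > 0, κ * hardyIntegral volume (s * p) x₀ R
        (fun x ↦ ENNReal.ofReal (cutoff p x₀ R ε x * |u x - v x| ^ p)) ≤
      N + κ * hardyIntegral volume (s * p) x₀ R
        (fun x ↦ ENNReal.ofReal (cutoff p x₀ R ε x * |u x - v x| ^ p)) / 2 := by
  have : 0 < p - 1 := by linarith
  obtain ⟨t, t_pos, ht⟩ := exists_ofReal_mul_rpow_neg_mul_le (sub_pos.2 hp₁) (3 / (p - 1) * 2)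
    (cutoffEnergyConst_lt_top (n := n) (p := p) (by linarith) hs₁ hs₂).ne
    (ENNReal.half_pos (hκ ▸ exteriorKernelConst_pos _).ne')
  refine ⟨gagliardoE n s p (ball x₀ (2 * R)) u + ENNReal.ofReal (3 / (p - 1)) *
    ((∫⁻ x in ball x₀ R, ENNReal.ofReal (|f x| * |u x - v x|)) +
      (ENNReal.ofReal t * (gagliardoE n s p (ball x₀ R) u + gagliardoE n s p (ball x₀ R) v) +
        ENNReal.ofReal (2 * t ^ (-(p - 1))) * (cutoffEnergyConst n s p *
          gagliardoE n s p (ball x₀ R) (fun x ↦ u x - v x)))), ?_, fun ε hε ↦ ?_⟩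
  · have := h.gagliardoE_left_lt_top
    have := h.gagliardoE_left_ball_lt_top
    have := h.gagliardoE_right_lt_top
    have := h.gagliardoE_sub_lt_top hp₁.le
    have := h.lintegral_rhs_mul_sub_lt_top hp₁
    have := cutoffEnergyConst_lt_top (n := n) (by linarith : 0 < p) hs₁ hs₂
    finiteness
  · have energy := h.exteriorKernelConst_mul_hardyIntegral_cutoff_le hp₁ hp₂ hs₁ hε
    grw [h.setLIntegral_compl_fluxPairing_cutoff_le hp₁ hp₂ hs₁ hs₂ hε t_pos, ← hκ] at energy
    set X := hardyIntegral volume (s * p) x₀ R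
      (fun x ↦ ENNReal.ofReal (cutoff p x₀ R ε x * |u x - v x| ^ p))
    rw [ENNReal.mul_div_right_comm]
    grw [← ht]
    refine energy.trans_eq ?_
    rw [mul_assoc (3 / (p - 1)), ENNReal.ofReal_mul (p := 3 / (p - 1)) (by positivity)]
    ring

lemma exists_forall_hardyIntegral_cutoff_le [NeZero n] (h : IsComparisonPair n s p x₀ R f u v)
    (hp₁ : 1 < p) (hp₂ : p ≤ 2) (hs₁ : 0 < s) (hs₂ : s < 1) :
    ∃ M < ⊤, ∀ ε > 0, hardyIntegral volume (s * p) x₀ R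
      (fun x ↦ ENNReal.ofReal (cutoff p x₀ R ε x * |u x - v x| ^ p)) ≤ M := by
  obtain ⟨N, N_lt_top, hN⟩ :=
    h.exists_forall_mul_hardyIntegral_cutoff_le_add_half hp₁ hp₂ hs₁ hs₂ rfl
  set κ := exteriorKernelConst (volume : Measure (EuclideanSpace ℝ (Fin n))) (s * p)
  have κ_pos : 0 < κ := exteriorKernelConst_pos _
  have κ_lt_top : κ < ⊤ := exteriorKernelConst_lt_top _
  refine ⟨2 * N / κ, ENNReal.div_lt_top (by finiteness) κ_pos.ne', fun ε hε ↦ ?_⟩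
  have : hardyIntegral volume (s * p) x₀ R
      (fun x ↦ ENNReal.ofReal (cutoff p x₀ R ε x * |u x - v x| ^ p)) < ⊤ :=
    hardyIntegral_cutoff_lt_top hp₁ (by positivity) hε (h.lintegral_sub_lt_top hp₁.le)
  rw [ENNReal.le_div_iff_mul_le (.inl κ_pos.ne') (.inl κ_lt_top.ne), mul_comm]
  exact le_two_mul_of_le_add_half (by finiteness) (hN ε hε)

lemma hardyIntegral_sub_lt_top [NeZero n] (h : IsComparisonPair n s p x₀ R f u v)
    (hp₁ : 1 < p) (hp₂ : p ≤ 2) (hs₁ : 0 < s) (hs₂ : s < 1) :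
    hardyIntegral volume (s * p) x₀ R (fun x ↦ ENNReal.ofReal (|u x - v x| ^ p)) < ⊤ := by
  have hu := h.measurable_left
  have hv := h.measurable_right
  obtain ⟨M, M_lt_top, hM⟩ := h.exists_forall_hardyIntegral_cutoff_le hp₁ hp₂ hs₁ hs₂
  refine lt_of_le_of_lt (lintegral_le_of_tendsto (fun k ↦ ?_)
    (fun k : ℕ ↦ hM (1 / (k + 1)) (by positivity)) ?_) M_lt_top
  · have := measurable_cutoff (p := p) (x₀ := x₀) (R := R) (ε := 1 / ((k : ℝ) + 1))
    fun_prop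
  · refine ae_restrict_of_forall_mem measurableSet_ball fun x hx ↦ ?_
    have cutoff_tendsto := tendsto_cutoff (p := p) hx tendsto_one_div_add_atTop_nhds_zero_nat
    simpa only [one_mul] using ENNReal.Tendsto.mul_const
      (ENNReal.tendsto_ofReal (cutoff_tendsto.mul_const _)) (.inr ENNReal.ofReal_ne_top)

end HardyBound

section Energy

lemma tendsto_sub_mul_cutoff (h : IsComparisonPair n s p x₀ R f u v) {ε : ℕ → ℝ}
    (hε : Tendsto ε atTop (𝓝 0)) (x : EuclideanSpace ℝ (Fin n)) :
    Tendsto (fun k ↦ (u x - v x) * cutoff p x₀ R (ε k) x) atTop (𝓝 (u x - v x)) := by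
  by_cases hx : x ∈ ball x₀ R
  · simpa only [mul_one] using (tendsto_cutoff (p := p) hx hε).const_mul (u x - v x)
  · simp only [h.right_eq_left x hx, sub_self, zero_mul, tendsto_const_nhds]

lemma integrableOn_cutoffMajorant [NeZero n] (h : IsComparisonPair n s p x₀ R f u v)
    (hp₁ : 1 < p) (hp₂ : p ≤ 2) (hs₁ : 0 < s) (hs₂ : s < 1) :
    IntegrableOn (cutoffMajorant p x₀ R (fun x ↦ u x - v x) (fun x ↦ |u x - v x| ^ p))
      (ball x₀ R ×ˢ ball x₀ R) (fractionalMeasure n s p) := by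
  have hw : Measurable fun x ↦ u x - v x := h.measurable_left.sub h.measurable_right
  have hwp : Measurable fun x ↦ |u x - v x| ^ p := by fun_prop
  refine ⟨(measurable_cutoffMajorant hw hwp).aestronglyMeasurable,
    (hasFiniteIntegral_iff_ofReal (ae_restrict_of_forall_mem
      (measurableSet_ball.prod measurableSet_ball) fun z hz ↦
        cutoffMajorant_nonneg hp₁ hz fun x ↦ by positivity)).2 ?_⟩
  refine (setLIntegral_le_lintegral _ _).trans_lt
    ((lintegral_cutoffMajorant_le hp₁ hw hwp fun x hx ↦ ?_).trans_lt ?_)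
  · rw [h.right_eq_left x hx, sub_self, abs_zero, Real.zero_rpow (by linarith)]
  · exact ENNReal.mul_lt_top (cutoffEnergyConst_lt_top (by linarith) hs₁ hs₂)
      (ENNReal.add_lt_top.2 ⟨h.gagliardoE_sub_lt_top hp₁.le,
        h.hardyIntegral_sub_lt_top hp₁ hp₂ hs₁ hs₂⟩)

lemma abs_fluxPairing_cutoff_le (hp : 1 < p) (hε : 0 < ε)
    {z : EuclideanSpace ℝ (Fin n) × EuclideanSpace ℝ (Fin n)} (hz : z ∈ ball x₀ R ×ˢ ball x₀ R) :
    |fluxPairing p u v (fun x ↦ (u x - v x) * cutoff p x₀ R ε x) z| ≤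
      |u z.1 - u z.2| ^ p + |v z.1 - v z.2| ^ p +
        2 * cutoffMajorant p x₀ R (fun x ↦ u x - v x) (fun x ↦ |u x - v x| ^ p) z := by
  have young := abs_fluxPairing_le hp one_pos u v
    (fun x ↦ (u x - v x) * cutoff p x₀ R ε x) z
  rw [one_mul, Real.one_rpow, mul_one] at young
  refine young.trans ?_
  gcongr
  exact (abs_mul_cutoff_sub_rpow_le hp hε (fun x ↦ u x - v x) z.1 z.2).trans
    (cutoffMajorant_le_cutoffMajorant hp hz fun x ↦
      mul_le_of_le_one_left (by positivity) (cutoff_le_one hp hε x))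

lemma lintegral_fluxPairing_sub_le [NeZero n] (h : IsComparisonPair n s p x₀ R f u v)
    (hp₁ : 1 < p) (hp₂ : p ≤ 2) (hs₁ : 0 < s) (hs₂ : s < 1) :
    ∫⁻ z, ENNReal.ofReal (fluxPairing p u v (fun x ↦ u x - v x) z) ∂fractionalMeasure n s p ≤
      ∫⁻ x in ball x₀ R, ENNReal.ofReal (|f x| * |u x - v x|) := by
  have hB : MeasurableSet (ball x₀ R ×ˢ ball x₀ R) := measurableSet_ball.prod measurableSet_ball
  set g := (ball x₀ R ×ˢ ball x₀ R).indicator fun z ↦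
    |u z.1 - u z.2| ^ p + |v z.1 - v z.2| ^ p +
      2 * cutoffMajorant p x₀ R (fun x ↦ u x - v x) (fun x ↦ |u x - v x| ^ p) z with hg
  have g_nonneg (z) : 0 ≤ g z := indicator_nonneg (fun z hz ↦ by
    have := cutoffMajorant_nonneg (w := fun x ↦ u x - v x) (h := fun x ↦ |u x - v x| ^ p) hp₁ hz
      fun x ↦ by positivity
    positivity) z
  have integrable_g : Integrable g (fractionalMeasure n s p) :=
    (integrable_indicator_iff hB).2
      (((integrableOn_abs_sub_rpow measurableSet_ball h.measurable_left
        h.gagliardoE_left_ball_lt_top).add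
        (integrableOn_abs_sub_rpow measurableSet_ball h.measurable_right
          h.gagliardoE_right_lt_top)).add
        ((h.integrableOn_cutoffMajorant hp₁ hp₂ hs₁ hs₂).const_mul 2))
  refine lintegral_ofReal_le_of_tendsto
    (H := fun k : ℕ ↦ fluxPairing p u v (fun x ↦ (u x - v x) * cutoff p x₀ R (1 / (k + 1)) x))
    (fun k ↦ h.integrable_fluxPairing_cutoff hp₁ hp₂ hs₁ hs₂ (by positivity))
    (h.lintegral_rhs_mul_sub_lt_top hp₁).ne
    (fun k ↦ h.integral_fluxPairing_cutoff_le hp₁ hp₂ hs₁ hs₂ (by positivity))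
    integrable_g g_nonneg (fun k z ↦ ?_) (fluxPairing_sub_nonneg hp₁ hp₂ u v) fun z ↦ ?_
  · by_cases hz : z ∈ ball x₀ R ×ˢ ball x₀ R
    · rw [hg, indicator_of_mem hz]
      exact neg_le_of_abs_le (abs_fluxPairing_cutoff_le hp₁ (by positivity) hz)
    · rw [hg, indicator_of_notMem hz, neg_zero]
      exact h.fluxPairing_cutoff_nonneg hp₁ hp₂ (by positivity) hz
  · have sub_mul_cutoff_tendsto (x) :=
      h.tendsto_sub_mul_cutoff tendsto_one_div_add_atTop_nhds_zero_nat x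
    exact ((sub_mul_cutoff_tendsto z.1).sub (sub_mul_cutoff_tendsto z.2)).const_mul _

end Energy

section Poincare

lemma exteriorKernelConst_mul_lintegral_sub_le [NeZero n] (h : IsComparisonPair n s p x₀ R f u v)
    (hp : 0 < p) (hs : 0 < s) :
    exteriorKernelConst (volume : Measure (EuclideanSpace ℝ (Fin n))) (s * p) *
        ∫⁻ x in ball x₀ R, ENNReal.ofReal (|u x - v x| ^ p) ≤
      ENNReal.ofReal (R ^ (s * p)) *
        gagliardoE n s p (ball x₀ (2 * R)) (fun x ↦ u x - v x) := by
  have hw : Measurable fun x ↦ u x - v x := h.measurable_left.sub h.measurable_right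
  have hS : MeasurableSet (ball x₀ R ×ˢ (ball x₀ (2 * R) \ ball x₀ R)) :=
    measurableSet_ball.prod (measurableSet_ball.diff measurableSet_ball)
  grw [lintegral_le_rpow_mul_hardyIntegral volume (σ := s * p) (by positivity) (by fun_prop),
    mul_left_comm, exteriorKernelConst_mul_hardyIntegral_le volume (by positivity) (by fun_prop)]
  rw [finrank_euclideanSpace, Fintype.card_fin, gagliardoE_eq measurableSet_ball hw]
  gcongr ENNReal.ofReal (R ^ (s * p)) * ?_
  calc ∫⁻ z in ball x₀ R ×ˢ (ball x₀ (2 * R) \ ball x₀ R),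
        ENNReal.ofReal (|u z.1 - v z.1| ^ p) ∂fractionalMeasure n s p
      = ∫⁻ z in ball x₀ R ×ˢ (ball x₀ (2 * R) \ ball x₀ R),
          ENNReal.ofReal (|u z.1 - v z.1 - (u z.2 - v z.2)| ^ p) ∂fractionalMeasure n s p :=
        setLIntegral_congr_fun hS fun z hz ↦ by
          rw [h.right_eq_left _ hz.2.2, sub_self, sub_zero]
    _ ≤ _ := lintegral_mono_set (prod_mono h.ball_subset_ball_two_mul sdiff_subset)

end Poincare

section Comparison

lemma lintegral_sub_le [NeZero n] (h : IsComparisonPair n s p x₀ R f u v) (hp : 0 < p)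
    (hs : 0 < s) :
    ∫⁻ x in ball x₀ R, ENNReal.ofReal (|u x - v x| ^ p) ≤
      ENNReal.ofReal (R ^ (s * p) / (exteriorKernelConst
        (volume : Measure (EuclideanSpace ℝ (Fin n))) (s * p)).toReal) *
          gagliardoE n s p (ball x₀ (2 * R)) (fun x ↦ u x - v x) := by
  rw [ENNReal.ofReal_div_of_pos exteriorKernelConst_toReal_pos,
    ENNReal.ofReal_toReal (exteriorKernelConst_lt_top _).ne, ← ENNReal.mul_div_right_comm,
    ENNReal.le_div_iff_mul_le (.inl (exteriorKernelConst_pos _).ne')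
      (.inl (exteriorKernelConst_lt_top _).ne), mul_comm]
  exact h.exteriorKernelConst_mul_lintegral_sub_le hp hs

lemma gagliardoE_sub_le_add_lintegral [NeZero n] (h : IsComparisonPair n s p x₀ R f u v)
    (hp₁ : 1 < p) (hp₂ : p ≤ 2) (hs₁ : 0 < s) (hs₂ : s < 1) {δ : ℝ} (hδ₀ : 0 < δ) (hδ₁ : δ ≤ 1) :
    gagliardoE n s p (ball x₀ (2 * R)) (fun x ↦ u x - v x) ≤
      ENNReal.ofReal δ * gagliardoE n s p (ball x₀ (2 * R)) u +
        ENNReal.ofReal (3 / (p - 1) * δ ^ (-((2 - p) / p))) *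
          ∫⁻ x in ball x₀ R, ENNReal.ofReal (|f x| * |u x - v x|) := by
  grw [gagliardoE_sub_le_add_lintegral_fluxPairing hp₁ hp₂ measurableSet_ball h.measurable_left
    h.measurable_right hδ₀ hδ₁, h.lintegral_fluxPairing_sub_le hp₁ hp₂ hs₁ hs₂]

lemma gagliardoE_sub_two_mul_lt_top [NeZero n] (h : IsComparisonPair n s p x₀ R f u v)
    (hp₁ : 1 < p) (hp₂ : p ≤ 2) (hs₁ : 0 < s) (hs₂ : s < 1) :
    gagliardoE n s p (ball x₀ (2 * R)) (fun x ↦ u x - v x) < ⊤ :=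
  (h.gagliardoE_sub_le_add_lintegral hp₁ hp₂ hs₁ hs₂ one_pos le_rfl).trans_lt
    (ENNReal.add_lt_top.2 ⟨ENNReal.mul_lt_top ENNReal.ofReal_lt_top h.gagliardoE_left_lt_top,
      ENNReal.mul_lt_top ENNReal.ofReal_lt_top (h.lintegral_rhs_mul_sub_lt_top hp₁)⟩)

theorem gagliardoE_sub_le [NeZero n] (h : IsComparisonPair n s p x₀ R f u v) (hp₁ : 1 < p)
    (hp₂ : p ≤ 2) (hs₁ : 0 < s) (hs₂ : s < 1) {δ : ℝ} (hδ₀ : 0 < δ) (hδ₁ : δ ≤ 1) :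
    gagliardoE n s p (ball x₀ (2 * R)) (fun x ↦ u x - v x) ≤
      ENNReal.ofReal δ * gagliardoE n s p (ball x₀ (2 * R)) u +
        ENNReal.ofReal (comparisonConst n s p * δ ^ (-((2 - p) / (p - 1))) *
          R ^ (s * (p / (p - 1)))) *
            ∫⁻ x in ball x₀ R, ENNReal.ofReal (|f x| ^ (p / (p - 1))) := by
  have : 0 < p - 1 := by linarith
  have hR := h.radius_pos
  set L := 3 / (p - 1) * (δ / 2) ^ (-((2 - p) / p)) with hL
  have absorbed := le_two_mul_of_young hp₁ (by positivity : 0 < L)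
    (div_pos (Real.rpow_pos_of_pos hR (s * p)) (exteriorKernelConst_toReal_pos (n := n)))
    (h.gagliardoE_sub_two_mul_lt_top hp₁ hp₂ hs₁ hs₂).ne fun t ht ↦ by
      have energy :=
        h.gagliardoE_sub_le_add_lintegral hp₁ hp₂ hs₁ hs₂ (half_pos hδ₀) (by linarith)
      grw [lintegral_abs_mul_abs_le hp₁ ht h.measurable_rhs,
        h.lintegral_sub_le (by linarith) hs₁] at energy
      exact energy
  have two_mul_half : 2 * ENNReal.ofReal (δ / 2) = ENNReal.ofReal δ := by
    rw [← ENNReal.ofReal_ofNat 2, ← ENNReal.ofReal_mul two_pos.le, mul_div_cancel₀ δ two_ne_zero]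
  refine absorbed.trans_eq ?_
  rw [← two_mul_mul_rpow_eq_comparisonConst_mul hp₁ hδ₀ hR hL, mul_add, ← mul_assoc, ← mul_assoc,
    ENNReal.ofReal_mul two_pos.le, ENNReal.ofReal_ofNat, two_mul_half]

end Comparison

end IsComparisonPair

section ComparisonPair

variable {n : ℕ} {s p : ℝ} {Ω : Set (EuclideanSpace ℝ (Fin n))}
  {f u v : EuclideanSpace ℝ (Fin n) → ℝ} {x₀ : EuclideanSpace ℝ (Fin n)} {R : ℝ}

lemma gagliardoE_dim_zero (hp : p ≠ 0) (D : Set (EuclideanSpace ℝ (Fin 0)))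
    (u : EuclideanSpace ℝ (Fin 0) → ℝ) : gagliardoE 0 s p D u = 0 := by
  simp only [gagliardoE, Subsingleton.elim _ (0 : EuclideanSpace ℝ (Fin 0)), sub_self, abs_zero,
    Real.zero_rpow hp, zero_div, ENNReal.ofReal_zero, lintegral_zero]

open Classical in
lemma piecewise_ball_ae_eq (hvu : ∀ᵐ x, x ∉ ball x₀ R → v x = u x) :
    (ball x₀ R).piecewise v u =ᵐ[volume] v := by
  filter_upwards [hvu] with x hx
  by_cases hxB : x ∈ ball x₀ R
  · rw [piecewise_eq_of_mem _ _ _ hxB]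
  · rw [piecewise_eq_of_notMem _ _ _ hxB, hx hxB]

open Classical in
lemma isComparisonPair_piecewise (hf : MemLploc n (p / (p - 1)) Ω f) (hR : 0 < R)
    (hΩ : closedBall x₀ (2 * R) ⊆ Ω) (hu : IsLocalWeakSolution n p s Ω f u)
    (hv : IsLocalWeakSolution n p s (ball x₀ R) (fun _ ↦ 0) v)
    (hvp : ∫⁻ x in ball x₀ R, ENNReal.ofReal (|v x| ^ p) < ⊤)
    (hvg : gagliardoE n s p (ball x₀ R) v < ⊤) (hvu : ∀ᵐ x, x ∉ ball x₀ R → v x = u x) :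
    IsComparisonPair n s p x₀ R f u ((ball x₀ R).piecewise v u) := by
  have ball_subset : ball x₀ R ⊆ closedBall x₀ (2 * R) :=
    (ball_subset_ball (by linarith)).trans ball_subset_closedBall
  have isCompact := isCompact_closedBall x₀ (2 * R)
  have piecewise_ae_eq := piecewise_ball_ae_eq hvu
  exact {
    radius_pos := hR
    measurable_rhs := hf.1
    lintegral_rhs_lt_top := (lintegral_mono_set ball_subset).trans_lt (hf.2 _ hΩ isCompact)
    left := hu.mono (ball_subset.trans hΩ)
    lintegral_left_lt_top := (lintegral_mono_set ball_subset).trans_lt (hu.2.1 _ hΩ isCompact).1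
    gagliardoE_left_lt_top :=
      (gagliardoE_mono ball_subset_closedBall).trans_lt (hu.2.1 _ hΩ isCompact).2
    right := hv.congr_ae (hv.1.piecewise measurableSet_ball hu.1) piecewise_ae_eq.symm
    lintegral_right_lt_top := by
      rwa [setLIntegral_congr_fun measurableSet_ball fun x hx ↦ by
        rw [piecewise_eq_of_mem _ _ _ hx]]
    gagliardoE_right_lt_top := by rwa [gagliardoE_congr_ae piecewise_ae_eq]
    right_eq_left := fun x hx ↦ piecewise_eq_of_notMem _ _ _ hx }

end ComparisonPair

open Classical in
theorem comparison_fractional_seminorm_subquadratic_general (n : ℕ) (p s : ℝ) (hp₁ : 1 < p)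
    (hp₂ : p ≤ 2) (hs₁ : 0 < s) (hs₂ : s < 1) :
    ∃ c : ℝ, 0 < c ∧
      ∀ (Ω : Set (EuclideanSpace ℝ (Fin n))) (f u v : EuclideanSpace ℝ (Fin n) → ℝ)
        (x₀ : EuclideanSpace ℝ (Fin n)) (R : ℝ),
        MemLploc n (p / (p - 1)) Ω f →
        0 < R → closedBall x₀ (2 * R) ⊆ Ω →
        IsLocalWeakSolution n p s Ω f u →
        IsLocalWeakSolution n p s (ball x₀ R) (fun _ ↦ 0) v →
        (∫⁻ x in ball x₀ R, ENNReal.ofReal (|v x| ^ p)) < ⊤ →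
        gagliardoE n s p (ball x₀ R) v < ⊤ →
        (∀ᵐ x, x ∉ ball x₀ R → v x = u x) →
        ∀ δ : ℝ, 0 < δ → δ ≤ 1 →
          gagliardoE n s p (ball x₀ (2 * R)) (fun x ↦ u x - v x) ≤
            ENNReal.ofReal δ * gagliardoE n s p (ball x₀ (2 * R)) u +
              ENNReal.ofReal (c * δ ^ (-((2 - p) / (p - 1))) * R ^ (s * (p / (p - 1)))) *
                ∫⁻ x in ball x₀ R, ENNReal.ofReal (|f x| ^ (p / (p - 1))) := by
  refine ⟨comparisonConst n s p, comparisonConst_pos hp₁, ?_⟩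
  intro Ω f u v x₀ R hf hR hΩ hu hv hvp hvg hvu δ hδ₀ hδ₁
  rcases eq_or_ne n 0 with rfl | hn
  · rw [gagliardoE_dim_zero (by positivity)]
    exact zero_le
  have : NeZero n := ⟨hn⟩
  have sub_ae_eq : (fun x ↦ u x - v x) =ᵐ[volume]
      fun x ↦ u x - (ball x₀ R).piecewise v u x :=
    .sub .rfl (piecewise_ball_ae_eq hvu).symm
  rw [gagliardoE_congr_ae sub_ae_eq]
  exact (isComparisonPair_piecewise hf hR hΩ hu hv hvp hvg hvu).gagliardoE_sub_le hp₁ hp₂ hs₁ hs₂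
    hδ₀ hδ₁

theorem comparison_fractional_seminorm_subquadratic (n : ℕ) (p s : ℝ) (hp₁ : 1 < p) (hp₂ : p ≤ 2)
    (hs₁ : 0 < s) (hs₂ : s < 1) :
    ∃ c : ℝ, 0 < c ∧
      ∀ (Ω : Set (EuclideanSpace ℝ (Fin n))) (f u v : EuclideanSpace ℝ (Fin n) → ℝ)
        (x₀ : EuclideanSpace ℝ (Fin n)) (R : ℝ),
        IsOpen Ω → Bornology.IsBounded Ω →
        MemLploc n (p / (p - 1)) Ω f →
        0 < R → closedBall x₀ (2 * R) ⊆ Ω →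
        IsLocalWeakSolution n p s Ω f u →
        IsLocalWeakSolution n p s (ball x₀ R) (fun _ => 0) v →
        (∫⁻ x in ball x₀ R, ENNReal.ofReal (|v x| ^ p)) < ⊤ →
        gagliardoE n s p (ball x₀ R) v < ⊤ →
        (∀ᵐ x, x ∉ ball x₀ R → v x = u x) →
        ∀ δ : ℝ, 0 < δ → δ ≤ 1 →
          gagliardoE n s p (ball x₀ (2 * R)) (fun x => u x - v x) ≤
            ENNReal.ofReal δ * gagliardoE n s p (ball x₀ (2 * R)) u +
              ENNReal.ofReal (c * δ ^ (-((2 - p) / (p - 1))) * R ^ (s * (p / (p - 1)))) *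
                ∫⁻ x in ball x₀ R, ENNReal.ofReal (|f x| ^ (p / (p - 1))) := by
  obtain ⟨c, hc, h⟩ := comparison_fractional_seminorm_subquadratic_general n p s hp₁ hp₂ hs₁ hs₂
  exact ⟨c, hc, fun Ω f u v x₀ R _ _ ↦ h Ω f u v x₀ R⟩
end
end

section
/- Let p∈(1,2). There exists a constant c = c(p) such that for every δ∈(0,1/4] and all A,B∈ℝ one has |A−B|^p ≤ 16 δ |A|^p + c δ^{−(2−p)/p} (𝐀^{p−1} − 𝐁^{p−1})(A−B), where 𝐭^{p−1} := |t|^{p−2}t for t ≠ 0 and 𝐭^{p−1} := 0 for t = 0. (Note that the factor (𝐀^{p−1}−𝐁^{p−1})(A−B) is nonnegative by monotonicity of t ↦ 𝐭^{p−1}.) -/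
open MeasureTheory Metric Set
open scoped ENNReal

noncomputable section

/-!
For vectors of norms `a` and `b` and inner product `t`, the pairing
`⟪|x|^(q-1) x - |y|^(q-1) y, x - y⟫` splits into a radial part `(a^q - b^q) (a - b)` and an
angular part `(a^(q-1) + b^(q-1)) (a b - t)`, while `|x - y|^2 = (a - b)^2 + 2 (a b - t)`. For
`q ≤ 1` both parts compare termwise, by concavity of `r ↦ r^q` and antitonicity of `r ↦ r^(q-1)`,
so the pairing is at least `q M^(q-1) |x - y|^2` once `a, b ≤ M`.

Now take `q = p - 1` and put `δ = ε^p`. If `|A - B| ≤ ε |A|`, then `|A - B|^p ≤ δ |A|^p`. Otherwise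
both norms are at most `M = 2 |A - B| / ε`, and the bound on the pairing controls `|A - B|^p`.
-/

open scoped InnerProductSpace

/-- The power `|a|^(γ-1) a` of a vector, which extends `sgnPow` from `ℝ` to normed spaces.
As for `sgnPow`, its value at `0` is `0` for every `γ`. -/
def radialPow {E : Type*} [NormedAddCommGroup E] [NormedSpace ℝ E] (γ : ℝ) (a : E) : E :=
  ‖a‖ ^ (γ - 1) • a

theorem mul_rpow_sub_one_mul_sub_le_rpow_sub_rpow {q a b : ℝ} (hq₀ : 0 ≤ q) (hq₁ : q ≤ 1)
    (ha : 0 < a) (hb : 0 ≤ b) : q * a ^ (q - 1) * (a - b) ≤ a ^ q - b ^ q := by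
  have bernoulli : (b / a) ^ q ≤ 1 + q * (b / a - 1) := by
    have hs : -1 ≤ b / a - 1 := by linarith [div_nonneg hb ha.le]
    simpa only [add_sub_cancel] using rpow_one_add_le_one_add_mul_self hs hq₀ hq₁
  have scaled : b ^ q ≤ (1 + q * (b / a - 1)) * a ^ q := by
    rwa [Real.div_rpow hb ha.le, div_le_iff₀ (Real.rpow_pos_of_pos ha q)] at bernoulli
  calc q * a ^ (q - 1) * (a - b) = a ^ q - (1 + q * (b / a - 1)) * a ^ q := by
        rw [Real.rpow_sub_one ha.ne']
        field_simp
        ring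
    _ ≤ a ^ q - b ^ q := by linarith

theorem mul_rpow_sub_one_mul_sq_sub_le {q a b M : ℝ} (hq₀ : 0 ≤ q) (hq₁ : q ≤ 1)
    (ha : 0 ≤ a) (hb : 0 ≤ b) (haM : a ≤ M) (hbM : b ≤ M) :
    q * M ^ (q - 1) * (a - b) ^ 2 ≤ (a ^ q - b ^ q) * (a - b) := by
  wlog hba : b ≤ a generalizing a b
  · linarith [this hb ha hbM haM (le_of_not_ge hba)]
  rcases ha.eq_or_lt with rfl | ha_pos
  · simp [le_antisymm hba hb]
  have : 0 ≤ a - b := sub_nonneg.2 hba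
  have weight_le : M ^ (q - 1) ≤ a ^ (q - 1) :=
    Real.rpow_le_rpow_of_nonpos ha_pos haM (by linarith)
  calc q * M ^ (q - 1) * (a - b) ^ 2 ≤ q * a ^ (q - 1) * (a - b) ^ 2 := by gcongr
    _ = q * a ^ (q - 1) * (a - b) * (a - b) := by ring
    _ ≤ (a ^ q - b ^ q) * (a - b) := by
        gcongr
        exact mul_rpow_sub_one_mul_sub_le_rpow_sub_rpow hq₀ hq₁ ha_pos hb

section InnerProductSpace

variable {E : Type*} [NormedAddCommGroup E] [InnerProductSpace ℝ E]

theorem inner_radialPow_sub_eq {q : ℝ} (hq : q ≠ 0) (x y : E) :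
    ⟪radialPow q x - radialPow q y, x - y⟫_ℝ =
      (‖x‖ ^ q - ‖y‖ ^ q) * (‖x‖ - ‖y‖) +
        (‖x‖ ^ (q - 1) + ‖y‖ ^ (q - 1)) * (‖x‖ * ‖y‖ - ⟪x, y⟫_ℝ) := by
  have rpow_eq (z : E) : ‖z‖ ^ q = ‖z‖ ^ (q - 1) * ‖z‖ := by
    rw [← Real.rpow_add_one' (norm_nonneg z) (by simpa using hq), sub_add_cancel]
  simp only [radialPow, inner_sub_left, inner_sub_right, real_inner_smul_left,
    real_inner_self_eq_norm_sq, real_inner_comm x y, rpow_eq]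
  ring

theorem mul_rpow_sub_one_mul_norm_sub_sq_le_inner_radialPow_sub {q M : ℝ} {x y : E} (hq₀ : 0 < q)
    (hq₁ : q ≤ 1) (hx : ‖x‖ ≤ M) (hy : ‖y‖ ≤ M) :
    q * M ^ (q - 1) * ‖x - y‖ ^ 2 ≤ ⟪radialPow q x - radialPow q y, x - y⟫_ℝ := by
  have radial : q * M ^ (q - 1) * (‖x‖ - ‖y‖) ^ 2 ≤ (‖x‖ ^ q - ‖y‖ ^ q) * (‖x‖ - ‖y‖) :=
    mul_rpow_sub_one_mul_sq_sub_le hq₀.le hq₁ (norm_nonneg x) (norm_nonneg y) hx hy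
  have angular : q * M ^ (q - 1) * (2 * (‖x‖ * ‖y‖ - ⟪x, y⟫_ℝ)) ≤
      (‖x‖ ^ (q - 1) + ‖y‖ ^ (q - 1)) * (‖x‖ * ‖y‖ - ⟪x, y⟫_ℝ) := by
    rcases eq_or_ne x 0 with rfl | hx₀
    · simp
    rcases eq_or_ne y 0 with rfl | hy₀
    · simp
    have weight_le {z : E} (hz₀ : z ≠ 0) (hz : ‖z‖ ≤ M) : q * M ^ (q - 1) ≤ ‖z‖ ^ (q - 1) :=
      calc q * M ^ (q - 1) ≤ M ^ (q - 1) :=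
            mul_le_of_le_one_left (Real.rpow_nonneg ((norm_nonneg z).trans hz) _) hq₁
        _ ≤ ‖z‖ ^ (q - 1) :=
            Real.rpow_le_rpow_of_nonpos (norm_pos_iff.2 hz₀) hz (by linarith)
    rw [← mul_assoc]
    gcongr
    · exact sub_nonneg.2 (real_inner_le_norm x y)
    · linarith [weight_le hx₀ hx, weight_le hy₀ hy]
  calc q * M ^ (q - 1) * ‖x - y‖ ^ 2
      = q * M ^ (q - 1) * (‖x‖ - ‖y‖) ^ 2 +
          q * M ^ (q - 1) * (2 * (‖x‖ * ‖y‖ - ⟪x, y⟫_ℝ)) := by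
        rw [norm_sub_sq_real]
        ring
    _ ≤ (‖x‖ ^ q - ‖y‖ ^ q) * (‖x‖ - ‖y‖) +
          (‖x‖ ^ (q - 1) + ‖y‖ ^ (q - 1)) * (‖x‖ * ‖y‖ - ⟪x, y⟫_ℝ) := add_le_add radial angular
    _ = ⟪radialPow q x - radialPow q y, x - y⟫_ℝ :=
        (inner_radialPow_sub_eq hq₀.ne' x y).symm

theorem inner_radialPow_sub_nonneg {q : ℝ} (hq : 0 < q) (x y : E) :
    0 ≤ ⟪radialPow q x - radialPow q y, x - y⟫_ℝ := by
  rw [inner_radialPow_sub_eq hq.ne']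
  have radial : 0 ≤ (‖x‖ ^ q - ‖y‖ ^ q) * (‖x‖ - ‖y‖) := by
    rcases le_total ‖x‖ ‖y‖ with hxy | hyx
    · exact mul_nonneg_of_nonpos_of_nonpos
        (sub_nonpos.2 (Real.rpow_le_rpow (norm_nonneg x) hxy hq.le)) (sub_nonpos.2 hxy)
    · exact mul_nonneg
        (sub_nonneg.2 (Real.rpow_le_rpow (norm_nonneg y) hyx hq.le)) (sub_nonneg.2 hyx)
  have angular : 0 ≤ ‖x‖ * ‖y‖ - ⟪x, y⟫_ℝ := sub_nonneg.2 (real_inner_le_norm x y)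
  positivity

theorem norm_sub_rpow_le_of_mul_norm_lt {p ε : ℝ} {A B : E} (hp₁ : 1 < p) (hp₂ : p ≤ 2)
    (hε₀ : 0 < ε) (hε₁ : ε ≤ 1) (hAB : ε * ‖A‖ < ‖A - B‖) :
    ‖A - B‖ ^ p ≤ 2 ^ (2 - p) / (p - 1) * ε ^ (p - 2) *
      ⟪radialPow (p - 1) A - radialPow (p - 1) B, A - B⟫_ℝ := by
  have hp : 0 < p - 1 := sub_pos.2 hp₁
  set D := ‖A - B‖
  have hD : 0 < D := lt_of_le_of_lt (by positivity) hAB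
  have hA : ‖A‖ ≤ D / ε := by
    rw [le_div_iff₀' hε₀]
    exact hAB.le
  have hDε : D ≤ D / ε := le_div_self hD.le hε₀ hε₁
  have hB : ‖B‖ ≤ ‖A‖ + D := norm_le_norm_add_norm_sub A B
  have pairing_lower_bound : (p - 1) * (2 * (D / ε)) ^ (p - 2) * D ^ 2 ≤
      ⟪radialPow (p - 1) A - radialPow (p - 1) B, A - B⟫_ℝ := by
    rw [show p - 2 = p - 1 - 1 by ring]
    exact mul_rpow_sub_one_mul_norm_sub_sq_le_inner_radialPow_sub hp (by linarith)
      (by linarith) (by linarith)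
  have D_rpow : D ^ p = D ^ (p - 2) * D ^ 2 := by
    rw [← Real.rpow_two, ← Real.rpow_add hD, sub_add_cancel]
  have M_rpow : (2 * (D / ε)) ^ (p - 2) = D ^ (p - 2) / (2 ^ (2 - p) * ε ^ (p - 2)) := by
    rw [Real.mul_rpow zero_le_two (by positivity), Real.div_rpow hD.le hε₀.le, ← neg_sub 2 p,
      Real.rpow_neg zero_le_two]
    field_simp
  calc D ^ p
      = 2 ^ (2 - p) / (p - 1) * ε ^ (p - 2) * ((p - 1) * (2 * (D / ε)) ^ (p - 2) * D ^ 2) := by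
        rw [D_rpow, M_rpow]
        field_simp
    _ ≤ 2 ^ (2 - p) / (p - 1) * ε ^ (p - 2) *
          ⟪radialPow (p - 1) A - radialPow (p - 1) B, A - B⟫_ℝ := by gcongr

theorem subquadratic_algebraic_inequality_general {p δ : ℝ} (hp₁ : 1 < p) (hp₂ : p ≤ 2)
    (hδ₀ : 0 < δ) (hδ₁ : δ ≤ 1) (A B : E) :
    ‖A - B‖ ^ p ≤ δ * ‖A‖ ^ p + 2 ^ (2 - p) / (p - 1) * δ ^ (-((2 - p) / p)) *
      ⟪radialPow (p - 1) A - radialPow (p - 1) B, A - B⟫_ℝ := by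
  have hp : 0 < p - 1 := sub_pos.2 hp₁
  have hp₀ : 0 < p := zero_lt_one.trans hp₁
  obtain ⟨ε, hε₀, rfl⟩ : ∃ ε : ℝ, 0 < ε ∧ ε ^ p = δ :=
    ⟨δ ^ p⁻¹, Real.rpow_pos_of_pos hδ₀ _, Real.rpow_inv_rpow hδ₀.le hp₀.ne'⟩
  have hε₁ : ε ≤ 1 := by
    rwa [← Real.rpow_le_rpow_iff hε₀.le zero_le_one hp₀, Real.one_rpow]
  have weight_eq : (ε ^ p) ^ (-((2 - p) / p)) = ε ^ (p - 2) := by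
    rw [← Real.rpow_mul hε₀.le, mul_neg, mul_div_cancel₀ _ hp₀.ne', neg_sub]
  rw [weight_eq, ← Real.mul_rpow hε₀.le (norm_nonneg A)]
  rcases le_or_gt ‖A - B‖ (ε * ‖A‖) with close | far
  · have pairing_nonneg := inner_radialPow_sub_nonneg hp A B
    exact le_add_of_le_of_nonneg (by gcongr) (by positivity)
  · exact le_add_of_nonneg_of_le (by positivity)
      (norm_sub_rpow_le_of_mul_norm_lt hp₁ hp₂ hε₀ hε₁ far)

end InnerProductSpace

theorem real_inner_radialPow_sub (q a b : ℝ) :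
    ⟪radialPow q a - radialPow q b, a - b⟫_ℝ = (sgnPow q a - sgnPow q b) * (a - b) :=
  mul_comm _ _

theorem subquadratic_algebraic_inequality (p : ℝ) (hp₁ : 1 < p) (hp₂ : p < 2) :
    ∃ c : ℝ, 0 < c ∧
      ∀ δ A B : ℝ, 0 < δ → δ ≤ 1 / 4 →
        |A - B| ^ p ≤
          16 * δ * |A| ^ p +
            c * δ ^ (-((2 - p) / p)) *
              ((sgnPow (p - 1) A - sgnPow (p - 1) B) * (A - B)) := by
  refine ⟨2 ^ (2 - p) / (p - 1), div_pos (by positivity) (sub_pos.2 hp₁), fun δ A B hδ₀ hδ₁ ↦ ?_⟩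
  have general := subquadratic_algebraic_inequality_general hp₁ hp₂.le hδ₀ (by linarith) A B
  rw [real_inner_radialPow_sub, Real.norm_eq_abs, Real.norm_eq_abs] at general
  linarith [show 0 ≤ δ * |A| ^ p by positivity]
end
end
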